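/- The D'(m|n)-module F = ⊕_{a∈ℤ} F_a is faithful (its annihilator in D'(m|n) is zero), and any central element z ∈ Z(U(gl(m|n))) that annihilates ⊕_{λ∈AW_{m|n}} M(λ) is zero, where AW_{m|n} is the set of typical antidominant gl(m|n)-weights λ with λ_i ∉ ℤ for all i∈I. -/

import Mathlib

set_option maxHeartbeats 1000000
set_option synthInstance.maxHeartbeats 400000

noncomputable section
open scoped TensorProduct

/-- The index set `I = {1,…,m,1̄,…,n̄}` of `gl(m|n)`; `Sum.inl` are the even
(unbarred) indices, `Sum.inr` the odd (barred) ones.  The index set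
`Î = {0} ∪ I` of `gl(m+1|n)` is realized as `Ind (m+1) n`, with `0 = Sum.inl 0`. -/
abbrev Ind (m n : ℕ) := Fin m ⊕ Fin n

/-- Parity of an index, as `0` or `1`. -/
def pI {m n : ℕ} : Ind m n → ℕ := Sum.elim (fun _ => 0) (fun _ => 1)

/-- The total order `1 < ⋯ < m < 1̄ < ⋯ < n̄` on `I` (and, with `m+1` in place of `m`,
the order `0 < 1 < ⋯ < m < 1̄ < ⋯ < n̄` on `Î`). -/
def iltI {m n : ℕ} : Ind m n → Ind m n → Prop
  | Sum.inl a, Sum.inl b => a < b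
  | Sum.inl _, Sum.inr _ => True
  | Sum.inr _, Sum.inl _ => False
  | Sum.inr a, Sum.inr b => a < b

/-- The distinguished index `0` of `Î`. -/
def z0 {m n : ℕ} : Ind (m+1) n := Sum.inl 0

/-- The inclusion `I ↪ Î`. -/
def emb {m n : ℕ} : Ind m n → Ind (m+1) n := Sum.map Fin.succ id

lemma emb_injective {m n : ℕ} : Function.Injective (emb (m := m) (n := n)) := by
  intro a b h
  cases a <;> cases b <;> simp [emb, Fin.succ_inj] at h <;> simp [h]

lemma emb_ne_z0 {m n : ℕ} (a : Ind m n) : emb a ≠ z0 := by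
  cases a <;> simp [emb, z0, Fin.succ_ne_zero]

/-- Builds a linear map out of a space with basis `α` from a function on basis vectors. -/
def mkOp {α M : Type} [AddCommGroup M] [Module ℂ M] (g : α → M) : (α →₀ ℂ) →ₗ[ℂ] M :=
  Finsupp.lsum ℂ fun x => LinearMap.toSpanSingleton ℂ M (g x)

/-- Number of odd variables occurring before position `i`. -/
def cntB {n : ℕ} (b : Fin n → Bool) (i : Fin n) : ℕ :=
  (Finset.univ.filter fun j => j < i ∧ b j = true).card

/-- Number of odd variables occurring. -/
def cntA {n : ℕ} (b : Fin n → Bool) : ℕ := (Finset.univ.filter fun j => b j = true).card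


/-- The defining (super-)commutation relations of `gl`:
`e_ij e_kl − (−1)^{(|i|+|j|)(|k|+|l|)} e_kl e_ij = δ_jk e_il − (−1)^{(|i|+|j|)(|k|+|l|)} δ_li e_kj`. -/
inductive glRel (ι : Type) (p : ι → ℕ) [DecidableEq ι] :
    FreeAlgebra ℂ (ι × ι) → FreeAlgebra ℂ (ι × ι) → Prop
  | basic (i j k l : ι) : glRel ι p
      (FreeAlgebra.ι ℂ (i, j) * FreeAlgebra.ι ℂ (k, l)
        - ((-1 : ℂ) ^ ((p i + p j) * (p k + p l))) •
            (FreeAlgebra.ι ℂ (k, l) * FreeAlgebra.ι ℂ (i, j)))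
      ((if j = k then FreeAlgebra.ι ℂ (i, l) else 0)
        - ((-1 : ℂ) ^ ((p i + p j) * (p k + p l))) •
            (if l = i then FreeAlgebra.ι ℂ (k, j) else 0))

/-- The universal enveloping superalgebra of the general linear Lie superalgebra with
index set `ι` and parity `p`, presented by generators `e_ij` and the super-commutator
relations. -/
abbrev UEA (ι : Type) (p : ι → ℕ) [DecidableEq ι] : Type := RingQuot (glRel ι p)

/-- The generator `e_ij` of `UEA ι p`. -/
def gen {ι : Type} (p : ι → ℕ) [DecidableEq ι] (i j : ι) : UEA ι p :=
  RingQuot.mkAlgHom ℂ (glRel ι p) (FreeAlgebra.ι ℂ (i, j))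

/-- Monomials `t_0^{k} t^e t̄^b` of `F = ℂ[t_0^{±1},t_1,…,t_m] ⊗ Λ_n`. -/
abbrev FMon (m n : ℕ) := ℤ × (Fin m → ℕ) × (Fin n → Bool)

/-- `F = ℂ[t_0^{±1},t_1,…,t_m] ⊗ Λ_n` as the vector space with basis the monomials. -/
abbrev FSp (m n : ℕ) : Type := FMon m n →₀ ℂ

/-- The basis monomial of `F` attached to `x`. -/
def fmono {m n : ℕ} (x : FMon m n) : FSp m n := Finsupp.single x 1

/-- Left multiplication by `t_i/t_0` for an even index `i ∈ {1,…,m}`. -/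
def opDivE {m n : ℕ} (i : Fin m) : Module.End ℂ (FSp m n) :=
  mkOp fun x => fmono (x.1 - 1, Function.update x.2.1 i (x.2.1 i + 1), x.2.2)

/-- Left multiplication by `t_ī/t_0` for an odd index `ī`. -/
def opDivO {m n : ℕ} (i : Fin n) : Module.End ℂ (FSp m n) :=
  mkOp fun x => if x.2.2 i then 0 else
    ((-1 : ℂ) ^ (cntB x.2.2 i)) • fmono (x.1 - 1, x.2.1, Function.update x.2.2 i true)

/-- The operator `t_0 ∂_0`. -/
def opPar0 {m n : ℕ} : Module.End ℂ (FSp m n) :=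
  mkOp fun x => (x.1 : ℂ) • fmono x

/-- The operator `t_0 ∂_i` for an even index `i ∈ {1,…,m}`. -/
def opParE {m n : ℕ} (i : Fin m) : Module.End ℂ (FSp m n) :=
  mkOp fun x => (x.2.1 i : ℂ) • fmono (x.1 + 1, Function.update x.2.1 i (x.2.1 i - 1), x.2.2)

/-- The operator `t_0 ∂_ī` for an odd index `ī`. -/
def opParO {m n : ℕ} (i : Fin n) : Module.End ℂ (FSp m n) :=
  mkOp fun x => if x.2.2 i then
    ((-1 : ℂ) ^ (cntB x.2.2 i)) • fmono (x.1 + 1, x.2.1, Function.update x.2.2 i false) else 0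

/-- The multiplication operators `t_i/t_0`, `i ∈ I`. -/
def opDiv {m n : ℕ} : Ind m n → Module.End ℂ (FSp m n) := Sum.elim opDivE opDivO

/-- The operators `t_0 ∂_i`, `i ∈ Î`. -/
def opPar {m n : ℕ} : Ind (m+1) n → Module.End ℂ (FSp m n) :=
  Sum.elim (Fin.cases opPar0 opParE) opParO

/-- The multiplication operators `t_i/t_0` for `i ∈ Î` (equal to `1` for `i = 0`). -/
def opDivB {m n : ℕ} : Ind (m+1) n → Module.End ℂ (FSp m n) :=
  Sum.elim (Fin.cases 1 opDivE) opDivO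

/-- The generators of `D'(m|n)`. -/
def Dgens (m n : ℕ) : Set (Module.End ℂ (FSp m n)) := Set.range opDiv ∪ Set.range opPar

/-- The superalgebra `D'(m|n)` of differential operators on `F`, i.e. the subalgebra of
operators on `F` generated by `t_i/t_0` (`i ∈ I`) and `t_0∂_i` (`i ∈ Î`). -/
def Dprime (m n : ℕ) : Subalgebra ℂ (Module.End ℂ (FSp m n)) := Algebra.adjoin ℂ (Dgens m n)

/-- `t_i/t_0` as an element of `D'(m|n)`. -/
def tdiv {m n : ℕ} (i : Ind m n) : Dprime m n :=
  ⟨opDiv i, Algebra.subset_adjoin (Or.inl ⟨i, rfl⟩)⟩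

/-- `t_0∂_i` as an element of `D'(m|n)`. -/
def tpar {m n : ℕ} (i : Ind (m+1) n) : Dprime m n :=
  ⟨opPar i, Algebra.subset_adjoin (Or.inr ⟨i, rfl⟩)⟩

/-- `t_i/t_0` for `i ∈ Î` as an element of `D'(m|n)`. -/
def tdivB {m n : ℕ} : Ind (m+1) n → Dprime m n :=
  Sum.elim (Fin.cases 1 fun i => tdiv (Sum.inl i)) fun i => tdiv (Sum.inr i)

/-- The operator `t_a∂_b = (t_a/t_0)(t_0∂_b)` of `D'(m|n)`, for `a, b ∈ Î`. -/
def tdel {m n : ℕ} (a b : Ind (m+1) n) : Dprime m n := tdivB a * tpar b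

/-- The Euler operator `E = Σ_{i∈Î} t_i∂_i ∈ D'(m|n)`. -/
def En (m n : ℕ) : Dprime m n := ∑ i : Ind (m+1) n, tdel i i

noncomputable instance instDprimeRing (m n : ℕ) : Ring (Dprime m n) :=
  @Subalgebra.toRing ℂ (Module.End ℂ (FSp m n)) inferInstance inferInstance inferInstance _

noncomputable instance instDprimeAlgebra (m n : ℕ) : Algebra ℂ (Dprime m n) :=
  @Subalgebra.algebra ℂ (Module.End ℂ (FSp m n)) inferInstance inferInstance inferInstance _

/-- Monomials of the `D'(m|n)`-module `F_a`: such a monomial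
`t_0^{a−k_1−⋯−k_{n̄}} t_1^{k_1}⋯t_m^{k_m} t_{1̄}^{k_{1̄}}⋯t_{n̄}^{k_{n̄}}` is determined by the
exponents `(k_1,…,k_m,k_{1̄},…,k_{n̄})`. -/
abbrev FaMon (m n : ℕ) := (Fin m → ℕ) × (Fin n → Bool)

/-- The module `F_a`, as the vector space with basis its monomials. -/
abbrev FaSp (m n : ℕ) : Type := FaMon m n →₀ ℂ

/-- A basis monomial of `F_a`. -/
def amono {m n : ℕ} (x : FaMon m n) : FaSp m n := Finsupp.single x 1

/-- The parity of a monomial of `F_a`. -/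
def parM {m n : ℕ} (x : FaMon m n) : ℕ := cntA x.2

/-- The monomial `t_0^a` of `F_a`. -/
def hwMon (m n : ℕ) : FaMon m n := (fun _ => 0, fun _ => false)

/-- Multiplication by `t_i/t_0` on `F_a`, even `i`. -/
def aDivE {m n : ℕ} (i : Fin m) : Module.End ℂ (FaSp m n) :=
  mkOp fun x => amono (Function.update x.1 i (x.1 i + 1), x.2)

/-- Multiplication by `t_ī/t_0` on `F_a`, odd `ī`. -/
def aDivO {m n : ℕ} (i : Fin n) : Module.End ℂ (FaSp m n) :=
  mkOp fun x => if x.2 i then 0 else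
    ((-1 : ℂ) ^ (cntB x.2 i)) • amono (x.1, Function.update x.2 i true)

/-- The operator `t_0∂_0` on `F_a` (the exponent of `t_0` is `a` minus the total degree of the
other variables). -/
def aPar0 {m n : ℕ} (a : ℂ) : Module.End ℂ (FaSp m n) :=
  mkOp fun x => (a - (∑ i, (x.1 i : ℂ)) - (cntA x.2 : ℂ)) • amono x

/-- The operator `t_0∂_i` on `F_a`, even `i`. -/
def aParE {m n : ℕ} (i : Fin m) : Module.End ℂ (FaSp m n) :=
  mkOp fun x => (x.1 i : ℂ) • amono (Function.update x.1 i (x.1 i - 1), x.2)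

/-- The operator `t_0∂_ī` on `F_a`, odd `ī`. -/
def aParO {m n : ℕ} (i : Fin n) : Module.End ℂ (FaSp m n) :=
  mkOp fun x => if x.2 i then
    ((-1 : ℂ) ^ (cntB x.2 i)) • amono (x.1, Function.update x.2 i false) else 0

/-- `t_i/t_0` on `F_a` for `i ∈ I`. -/
def aDiv {m n : ℕ} : Ind m n → Module.End ℂ (FaSp m n) := Sum.elim aDivE aDivO

/-- `t_0∂_i` on `F_a` for `i ∈ Î`. -/
def aParB {m n : ℕ} (a : ℂ) : Ind (m+1) n → Module.End ℂ (FaSp m n) :=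
  Sum.elim (Fin.cases (aPar0 a) aParE) aParO

/-- `t_i/t_0` on `F_a` for `i ∈ Î`. -/
def aDivB {m n : ℕ} : Ind (m+1) n → Module.End ℂ (FaSp m n) :=
  Sum.elim (Fin.cases 1 aDivE) aDivO

/-- The operator `t_i∂_j` on `F_a`, `i, j ∈ Î`. -/
def aTD {m n : ℕ} (a : ℂ) (i j : Ind (m+1) n) : Module.End ℂ (FaSp m n) :=
  aDivB i * aParB a j

/-- The simple highest weight module `L(λ)` over `U(gl(m|n))`: a simple module with a
(nonzero) highest weight vector of weight `λ`. -/
structure SimpleHW (m n : ℕ) (lam : Ind m n → ℂ) where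
  L : Type
  [acg : AddCommGroup L]
  [mod : Module ℂ L]
  ρ : UEA (Ind m n) pI →ₐ[ℂ] Module.End ℂ L
  v : L
  v_ne : v ≠ 0
  hw : ∀ i j : Ind m n, iltI i j → ρ (gen pI i j) v = 0
  hwt : ∀ i : Ind m n, ρ (gen pI i i) v = lam i • v
  simple : ∀ N : Submodule ℂ L, (∀ u x, x ∈ N → ρ u x ∈ N) → N = ⊥ ∨ N = ⊤

attribute [instance] SimpleHW.acg SimpleHW.mod

/-- The Verma module `M(λ)` over `U(gl(m|n))`: a module generated by a highest weight vector
of weight `λ` which is universal among such. -/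
structure VermaM (m n : ℕ) (lam : Ind m n → ℂ) where
  L : Type
  [acg : AddCommGroup L]
  [mod : Module ℂ L]
  ρ : UEA (Ind m n) pI →ₐ[ℂ] Module.End ℂ L
  v : L
  v_ne : v ≠ 0
  hw : ∀ i j : Ind m n, iltI i j → ρ (gen pI i j) v = 0
  hwt : ∀ i : Ind m n, ρ (gen pI i i) v = lam i • v
  gens : ∀ N : Submodule ℂ L, (∀ u x, x ∈ N → ρ u x ∈ N) → v ∈ N → N = ⊤
  univ : ∀ (W : Type) [AddCommGroup W] [Module ℂ W]
      (ρW : UEA (Ind m n) pI →ₐ[ℂ] Module.End ℂ W) (w : W),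
      (∀ i j : Ind m n, iltI i j → ρW (gen pI i j) w = 0) →
      (∀ i : Ind m n, ρW (gen pI i i) w = lam i • w) →
      ∃ g : L →ₗ[ℂ] W, g v = w ∧ ∀ u x, g (ρ u x) = ρW u (g x)

attribute [instance] VermaM.acg VermaM.mod

/-- The predicate expressing that `Θ` is the representation of `U(gl(m+1|n))` on
`F_a ⊗ L` obtained via `φ_R` from a representation `ρ` of `U(gl(m|n))` on `L`, where the
central element `R` acts by the scalar `r`; the formulas for the action of the generators on
pure tensors (with the appropriate Koszul signs) are written out explicitly. -/
def IsTensorRep {m n : ℕ} (a r : ℂ) {L : Type} [AddCommGroup L] [Module ℂ L]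
    (ρ : UEA (Ind m n) pI →ₐ[ℂ] Module.End ℂ L)
    (Θ : UEA (Ind (m+1) n) pI →ₐ[ℂ] Module.End ℂ (FaSp m n ⊗[ℂ] L)) : Prop :=
  (∀ (c d : Ind m n) (x : FaMon m n) (v : L),
    Θ (gen pI (emb c) (emb d)) (amono x ⊗ₜ[ℂ] v) =
      (aTD a (emb c) (emb d)) (amono x) ⊗ₜ[ℂ] v
      + ((-1 : ℂ) ^ ((pI c + pI d) * parM x)) • (amono x ⊗ₜ[ℂ] (ρ (gen pI c d) v))
      + (if c = d then (((-1 : ℂ) ^ (pI c * pI d)) * r) • (amono x ⊗ₜ[ℂ] v) else 0)) ∧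
  (∀ (c : Ind m n) (x : FaMon m n) (v : L),
    Θ (gen pI (emb c) z0) (amono x ⊗ₜ[ℂ] v) =
      (aTD a (emb c) z0) (amono x) ⊗ₜ[ℂ] v
      - ∑ j : Ind m n, (((-1 : ℂ) ^ (pI c * pI j)) * ((-1 : ℂ) ^ ((pI c + pI j) * parM x))) •
          ((aDiv j (amono x)) ⊗ₜ[ℂ] (ρ (gen pI c j) v))) ∧
  (∀ (d : Ind m n) (x : FaMon m n) (v : L),
    Θ (gen pI z0 (emb d)) (amono x ⊗ₜ[ℂ] v) = (aTD a z0 (emb d)) (amono x) ⊗ₜ[ℂ] v) ∧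
  (∀ (x : FaMon m n) (v : L),
    Θ (gen pI z0 z0) (amono x ⊗ₜ[ℂ] v) =
      (aTD a z0 z0) (amono x) ⊗ₜ[ℂ] v + r • (amono x ⊗ₜ[ℂ] v))

/-- The shifted weight `λ̃ = (a+r, λ_1+r, …, λ_m+r, λ_{1̄}−r, …, λ_{n̄}−r)`. -/
def lamTilde {m n : ℕ} (a r : ℂ) (lam : Ind m n → ℂ) : Ind (m+1) n → ℂ :=
  Sum.elim (Fin.cases (a + r) fun k => lam (Sum.inl k) + r) fun k => lam (Sum.inr k) - r

/-- The Weyl vector `ρ_{m|n} = (m, m−1, …, 1, −1, −2, …, −n)`. -/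
def rhoS {m n : ℕ} : Ind m n → ℂ := Sum.elim (fun k => (m : ℂ) - k) fun k => -(k : ℂ) - 1

/-- Antidominance of a weight of `gl(m|n)`:
`⟨λ+ρ, α^∨⟩ ∉ ℤ_{>0}` for all positive even roots `α`. -/
def Antidom {m n : ℕ} (lam : Ind m n → ℂ) : Prop :=
  (∀ i j : Fin m, i < j → ¬∃ N : ℕ,
    (lam (Sum.inl i) + rhoS (m:=m) (n:=n) (Sum.inl i)) - (lam (Sum.inl j) + rhoS (m:=m) (n:=n) (Sum.inl j)) = (N : ℂ) + 1) ∧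
  (∀ i j : Fin n, i < j → ¬∃ N : ℕ,
    (lam (Sum.inr i) + rhoS (m:=m) (n:=n) (Sum.inr i)) - (lam (Sum.inr j) + rhoS (m:=m) (n:=n) (Sum.inr j)) = (N : ℂ) + 1)

/-- Typicality of a weight of `gl(m|n)`:
`(λ+ρ, α) ≠ 0` for all positive odd isotropic roots `α = δ_i − ε_j`. -/
def Typical {m n : ℕ} (lam : Ind m n → ℂ) : Prop :=
  ∀ (i : Fin m) (j : Fin n),
    (lam (Sum.inl i) + rhoS (m:=m) (n:=n) (Sum.inl i)) + (lam (Sum.inr j) + rhoS (m:=m) (n:=n) (Sum.inr j)) ≠ 0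

/-! `D'(m|n)` consists of operators on `F`, so it acts faithfully. For the center, grade the
matrix units by the order of their indices and let `𝔫⁻`, `𝔫⁺` be the lowering and raising parts.
By the Poincaré–Birkhoff–Witt theorem the enveloping superalgebra `U` is the direct sum of
`𝔫⁻U + U𝔫⁺` and the polynomial algebra in the `e_ii`. The projection to the latter takes an
element of the left ideal defining `M(λ)` to a polynomial vanishing at `λ`. A central `z`
killing `M(λ)` for all `λ` in a product of infinite sets therefore has zero projection, that is,
`z ∈ 𝔫⁻U + U𝔫⁺`. The weights with prescribed positive, strictly increasing imaginary parts form
such a product, and they are typical, antidominant and non-integral.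

To see that `z = 0`, consider the tensor powers of the natural representation, which are
unitary: the adjoint of `e_ij` is `e_ji`. There `z` maps singular vectors to singular vectors
orthogonal to all singular vectors, hence to `0`, and by induction on the height `z` acts as
zero. Finally the tensor powers separate the elements of `U`: the coaction on a tensor product
with the natural representation has as its matrix coefficients derivations `∂_ij` dual to the
`e_ij`, which to leading order strip one letter off a monomial, so their iterates detect the
leading terms of any element. The same derivations give the linear independence in the
Poincaré–Birkhoff–Witt theorem. -/

namespace UEA

section Presentation

variable {ι : Type} [DecidableEq ι] {p : ι → ℕ} {A : Type*} [Ring A] [Algebra ℂ A]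

variable (p) in
/-- A family `B i j` of elements of an algebra satisfies the supercommutation relations of the
matrix units `e_ij` of `gl`. -/
def SatisfiesGlRel (B : ι → ι → A) : Prop :=
  ∀ i j k l, B i j * B k l - (-1 : ℂ) ^ ((p i + p j) * (p k + p l)) • (B k l * B i j) =
    (if j = k then B i l else 0) -
      (-1 : ℂ) ^ ((p i + p j) * (p k + p l)) • if l = i then B k j else 0

theorem satisfiesGlRel_gen : SatisfiesGlRel p (gen p) := by
  intro i j k l
  have h := RingQuot.mkAlgHom_rel ℂ (glRel.basic (p := p) i j k l)
  simp only [map_sub, map_mul, map_smul, apply_ite (RingQuot.mkAlgHom ℂ (glRel ι p)),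
    map_zero] at h
  exact h

theorem SatisfiesGlRel.map {B : ι → ι → A} (hB : SatisfiesGlRel p B) {A' : Type*} [Ring A']
    [Algebra ℂ A'] (f : A →ₐ[ℂ] A') : SatisfiesGlRel p fun i j => f (B i j) := by
  intro i j k l
  have h := congrArg f (hB i j k l)
  simpa only [map_sub, map_mul, map_smul, apply_ite f, map_zero] using h

/-- The homomorphism out of the enveloping superalgebra determined by the images `B i j` of the
generators `e_ij`. -/
def lift (B : ι → ι → A) (hB : SatisfiesGlRel p B) : UEA ι p →ₐ[ℂ] A :=
  RingQuot.liftAlgHom ℂ ⟨FreeAlgebra.lift ℂ fun x : ι × ι => B x.1 x.2, by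
    rintro _ _ ⟨i, j, k, l⟩
    simpa only [map_sub, map_mul, map_smul, apply_ite (FreeAlgebra.lift ℂ _), map_zero,
      FreeAlgebra.lift_ι_apply] using hB i j k l⟩

@[simp]
theorem lift_gen (B : ι → ι → A) (hB : SatisfiesGlRel p B) (i j : ι) :
    lift B hB (gen p i j) = B i j := by
  simp [lift, gen]

theorem algHom_ext {f g : UEA ι p →ₐ[ℂ] A} (h : ∀ i j, f (gen p i j) = g (gen p i j)) : f = g :=
  RingQuot.ringQuot_ext' ℂ f g (FreeAlgebra.hom_ext (funext fun x => h x.1 x.2))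

theorem gen_mul_gen_mul_sub_mem (x y : ι × ι) {v : UEA ι p} {N : Submodule ℂ (UEA ι p)}
    (hxy : x.2 = y.1 → gen p x.1 y.2 * v ∈ N) (hyx : y.2 = x.1 → gen p y.1 x.2 * v ∈ N) :
    gen p x.1 x.2 * (gen p y.1 y.2 * v) -
      (-1 : ℂ) ^ ((p x.1 + p x.2) * (p y.1 + p y.2)) • (gen p y.1 y.2 * (gen p x.1 x.2 * v)) ∈
      N := by
  have h := congrArg (· * v) (satisfiesGlRel_gen (p := p) x.1 x.2 y.1 y.2)
  simp only [sub_mul, smul_mul_assoc, mul_assoc, ite_mul, zero_mul] at h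
  rw [h]
  refine N.sub_mem ?_ (N.smul_mem _ ?_) <;> split_ifs with heq <;>
    first | exact N.zero_mem | solve_by_elim

theorem gen_diag_mul_comm (i j : ι) : gen p i i * gen p j j = gen p j j * gen p i i := by
  have h := satisfiesGlRel_gen (p := p) i i j j
  rcases eq_or_ne i j with rfl | hij
  · rfl
  · rw [(show Even ((p i + p i) * (p j + p j)) from ⟨(p i + p i) * p j, by ring⟩).neg_one_pow,
      if_neg hij, if_neg hij.symm] at h
    simpa only [one_smul, sub_zero, sub_eq_zero] using h

variable (p) in
/-- The product of the generators `e_x` along a list of letters `x = (i, j)`. -/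
def word (l : List (ι × ι)) : UEA ι p := (l.map fun x => gen p x.1 x.2).prod

@[simp]
theorem word_nil : word p ([] : List (ι × ι)) = 1 := rfl

@[simp]
theorem word_cons (x : ι × ι) (l : List (ι × ι)) :
    word p (x :: l) = gen p x.1 x.2 * word p l := by
  simp [word]

theorem word_append (l l' : List (ι × ι)) : word p (l ++ l') = word p l * word p l' := by
  simp [word]

variable (p) in
/-- The span of the words in a given set of lists. -/
def wordSpan (s : Set (List (ι × ι))) : Submodule ℂ (UEA ι p) := Submodule.span ℂ (word p '' s)

theorem word_mem_wordSpan {s : Set (List (ι × ι))} {l : List (ι × ι)} (hl : l ∈ s) :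
    word p l ∈ wordSpan p s :=
  Submodule.subset_span ⟨l, hl, rfl⟩

theorem wordSpan_mono {s t : Set (List (ι × ι))} (hst : s ⊆ t) : wordSpan p s ≤ wordSpan p t :=
  Submodule.span_mono (Set.image_mono hst)

theorem apply_mem_of_mem_wordSpan {M : Type*} [AddCommGroup M] [Module ℂ M]
    {s : Set (List (ι × ι))} (f : UEA ι p →ₗ[ℂ] M) {N : Submodule ℂ M}
    (h : ∀ l ∈ s, f (word p l) ∈ N) {u : UEA ι p} (hu : u ∈ wordSpan p s) : f u ∈ N :=
  (Submodule.span_le (p := N.comap f)).2 (by rintro _ ⟨l, hl, rfl⟩; exact h l hl) hu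

theorem gen_mul_mem_wordSpan {s t : Set (List (ι × ι))} (x : ι × ι)
    (h : ∀ l ∈ s, x :: l ∈ t) {u : UEA ι p} (hu : u ∈ wordSpan p s) :
    gen p x.1 x.2 * u ∈ wordSpan p t :=
  apply_mem_of_mem_wordSpan (LinearMap.mulLeft ℂ (gen p x.1 x.2))
    (fun l hl => by simpa using word_mem_wordSpan (p := p) (h l hl)) hu

variable (ι p) in
theorem wordSpan_univ : wordSpan p (Set.univ : Set (List (ι × ι))) = ⊤ := by
  refine eq_top_iff.2 fun u _ => ?_
  suffices h : ∀ a : FreeAlgebra ℂ (ι × ι), ∀ v ∈ wordSpan p Set.univ,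
      RingQuot.mkAlgHom ℂ (glRel ι p) a * v ∈ wordSpan p Set.univ by
    obtain ⟨a, rfl⟩ := RingQuot.mkAlgHom_surjective ℂ (glRel ι p) u
    simpa using h a 1 (word_mem_wordSpan (Set.mem_univ []))
  intro a
  induction a using FreeAlgebra.induction with
  | grade0 c => intro v hv; simpa [← Algebra.smul_def] using Submodule.smul_mem _ c hv
  | grade1 x => exact fun v hv => gen_mul_mem_wordSpan x (fun _ _ => Set.mem_univ _) hv
  | mul a b ha hb => intro v hv; simpa [mul_assoc] using ha _ (hb v hv)
  | add a b ha hb => intro v hv; simpa [add_mul] using add_mem (ha v hv) (hb v hv)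

/-- The words of length less than `d`: the standard filtration of the enveloping algebra, with
`degreeLT d` the part of degree `< d`. -/
def degreeLT (p : ι → ℕ) (d : ℕ) : Submodule ℂ (UEA ι p) := wordSpan p {l | l.length < d}

end Presentation

section Spanning

variable {ι : Type} [DecidableEq ι] {p : ι → ℕ}

theorem gen_mul_self_of_odd {i j : ι} (h : Odd (p i + p j)) : gen p i j * gen p i j = 0 := by
  have hij : j ≠ i := by rintro rfl; exact (Nat.not_odd_iff_even.2 ⟨_, rfl⟩) h
  have hrel := satisfiesGlRel_gen (p := p) i j i j
  rw [(h.mul h).neg_one_pow, if_neg hij, smul_zero, sub_zero] at hrel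
  have htwo : (2 : ℂ) • (gen p i j * gen p i j) = 0 := by rw [← hrel]; module
  simpa using htwo

variable (p) in
/-- The multisets of letters indexing a Poincaré–Birkhoff–Witt basis: odd root vectors square to
zero, so they occur at most once. -/
def Admissible (β : Multiset (ι × ι)) : Prop :=
  ∀ x, Odd (p x.1 + p x.2) → β.count x ≤ 1

theorem Admissible.mono {β γ : Multiset (ι × ι)} (hβ : Admissible p β) (h : γ ≤ β) :
    Admissible p γ :=
  fun x hx => (Multiset.count_le_of_le x h).trans (hβ x hx)

/-- The nonempty words of length less than `d` whose letters lie in a set `Q` of roots. -/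
def shortWords (Q : ι → ι → Prop) (d : ℕ) : Set (List (ι × ι)) :=
  {l | l ≠ [] ∧ l.length < d ∧ ∀ x ∈ l, Q x.1 x.2}

theorem exists_word_sub_smul_mem_of_perm {Q : ι → ι → Prop} [IsTrans ι Q]
    {l l' : List (ι × ι)} (h : l.Perm l') (hl : ∀ x ∈ l, Q x.1 x.2) :
    ∃ c : ℂ, word p l - c • word p l' ∈ wordSpan p (shortWords Q l.length) := by
  induction h with
  | nil => exact ⟨1, by simp⟩
  | @cons x l l' _ ih =>
    obtain ⟨c, hc⟩ := ih fun y hy => hl y (List.mem_cons_of_mem x hy)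
    have hcons : ∀ k ∈ shortWords Q l.length, x :: k ∈ shortWords Q (x :: l).length :=
      fun k hk => ⟨List.cons_ne_nil _ _, by simpa using hk.2.1,
        List.forall_mem_cons.2 ⟨hl x List.mem_cons_self, hk.2.2⟩⟩
    refine ⟨c, ?_⟩
    rw [word_cons, word_cons, ← mul_smul_comm, ← mul_sub]
    exact gen_mul_mem_wordSpan x hcons hc
  | swap x y l =>
    simp only [List.forall_mem_cons] at hl
    have hmem (a b : ι) (hab : Q a b) :
        gen p a b * word p l ∈ wordSpan p (shortWords Q (y :: x :: l).length) := by
      rw [← word_cons (a, b)]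
      exact word_mem_wordSpan
        ⟨List.cons_ne_nil _ _, by simp, List.forall_mem_cons.2 ⟨hab, hl.2.2⟩⟩
    have hsub := gen_mul_gen_mul_sub_mem y x (v := word p l)
      (fun h => hmem _ _ (_root_.trans hl.1 (h ▸ hl.2.1)))
      (fun h => hmem _ _ (_root_.trans hl.2.1 (h ▸ hl.1)))
    exact ⟨_, by simpa only [word_cons] using hsub⟩
  | @trans l₁ l₂ l₃ h₁₂ _ ih₁₂ ih₂₃ =>
    obtain ⟨c, hc⟩ := ih₁₂ hl
    obtain ⟨c', hc'⟩ := ih₂₃ fun x hx => hl x (h₁₂.mem_iff.2 hx)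
    refine ⟨c * c', ?_⟩
    rw [← h₁₂.length_eq] at hc'
    convert add_mem hc (Submodule.smul_mem _ c hc') using 1
    module

theorem wordSpan_shortWords_le {Q : ι → ι → Prop} [IsTrans ι Q]
    {ord : Multiset (ι × ι) → List (ι × ι)} (hord : ∀ β, (ord β : Multiset (ι × ι)) = β) (d : ℕ) :
    wordSpan p (shortWords Q d) ≤
      wordSpan p (ord '' {β | Admissible p β ∧ β ≠ 0 ∧ ∀ x ∈ β, Q x.1 x.2}) := by
  induction d with
  | zero => exact wordSpan_mono fun l hl => absurd hl.2.1 (Nat.not_lt_zero _)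
  | succ d ih =>
    refine Submodule.span_le.2 ?_
    rintro _ ⟨l, ⟨hne, hlen, hQ⟩, rfl⟩
    have hlt : wordSpan p (shortWords Q l.length) ≤ wordSpan p (shortWords Q d) :=
      wordSpan_mono fun k hk => ⟨hk.1, hk.2.1.trans_le (Nat.lt_succ_iff.1 hlen), hk.2.2⟩
    by_cases hadm : Admissible p (l : Multiset (ι × ι))
    · have hperm : l.Perm (ord l) := Multiset.coe_eq_coe.1 (hord l).symm
      obtain ⟨c, hc⟩ := exists_word_sub_smul_mem_of_perm (p := p) hperm hQ
      have hmem : ord l ∈ ord '' {β | Admissible p β ∧ β ≠ 0 ∧ ∀ x ∈ β, Q x.1 x.2} :=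
        ⟨l, ⟨hadm, by simpa using hne, hQ⟩, rfl⟩
      simpa using add_mem (ih (hlt hc)) (Submodule.smul_mem _ c (word_mem_wordSpan hmem))
    · simp only [Admissible, not_forall, not_le] at hadm
      obtain ⟨x, hx, hcount⟩ := hadm
      obtain ⟨γ, hγ⟩ := Multiset.le_iff_exists_add.1 (Multiset.le_count_iff_replicate_le.1 hcount)
      obtain ⟨k, rfl⟩ := Quotient.exists_rep γ
      have hk : l.Perm (x :: x :: k) := Multiset.coe_eq_coe.1 hγ
      obtain ⟨c, hc⟩ := exists_word_sub_smul_mem_of_perm (p := p) hk hQ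
      rw [word_cons, word_cons, ← mul_assoc, gen_mul_self_of_odd hx, zero_mul, smul_zero,
        sub_zero] at hc
      exact ih (hlt hc)

theorem word_mem_wordSpan_admissible {Q : ι → ι → Prop} [IsTrans ι Q]
    {ord : Multiset (ι × ι) → List (ι × ι)} (hord : ∀ β, (ord β : Multiset (ι × ι)) = β)
    {l : List (ι × ι)} (hne : l ≠ []) (hl : ∀ x ∈ l, Q x.1 x.2) :
    word p l ∈ wordSpan p (ord '' {β | Admissible p β ∧ β ≠ 0 ∧ ∀ x ∈ β, Q x.1 x.2}) :=
  wordSpan_shortWords_le hord _ (word_mem_wordSpan ⟨hne, Nat.lt_succ_self _, hl⟩)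

theorem wordSpan_admissible_eq_top {ord : Multiset (ι × ι) → List (ι × ι)}
    (hord : ∀ β, (ord β : Multiset (ι × ι)) = β) :
    wordSpan p (ord '' {β | Admissible p β}) = ⊤ := by
  rw [eq_top_iff, ← wordSpan_univ]
  refine Submodule.span_le.2 ?_
  rintro _ ⟨l, -, rfl⟩
  rcases eq_or_ne l [] with rfl | hne
  · have h0 : ord 0 = [] := (Multiset.coe_eq_zero _).1 (hord 0)
    exact word_mem_wordSpan ⟨0, by simp [Admissible], h0⟩
  · have : IsTrans ι fun _ _ => True := ⟨fun _ _ _ _ _ => trivial⟩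
    exact wordSpan_mono (Set.image_mono fun β hβ => hβ.1)
      (word_mem_wordSpan_admissible (Q := fun _ _ => True) hord hne fun _ _ => trivial)

end Spanning

section CoordinateDerivations

variable {ι : Type} [DecidableEq ι] {p : ι → ℕ} {A : Type*} [Ring A] [Algebra ℂ A]

theorem SatisfiesGlRel.add {B C : ι → ι → A} (hB : SatisfiesGlRel p B) (hC : SatisfiesGlRel p C)
    (hBC : ∀ i j k l, B i j * C k l =
      (-1 : ℂ) ^ ((p i + p j) * (p k + p l)) • (C k l * B i j)) :
    SatisfiesGlRel p fun i j => B i j + C i j := by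
  intro i j k l
  have hCB : C i j * B k l = (-1 : ℂ) ^ ((p i + p j) * (p k + p l)) • (B k l * C i j) := by
    rw [hBC k l i j, smul_smul, mul_comm (p k + p l), ← pow_add, (Even.add_self _).neg_one_pow,
      one_smul]
  have hite (P : Prop) [Decidable P] (b c : A) :
      (if P then b + c else 0) = (if P then b else 0) + if P then c else 0 := by
    split_ifs <;> simp
  rw [hite, hite, smul_add, add_sub_add_comm, ← hB i j k l, ← hC i j k l]
  simp only [add_mul, mul_add, smul_add]
  rw [hBC i j k l, hCB]
  module

variable (p) in
theorem satisfiesGlRel_sign_smul_gen (c : ℕ) :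
    SatisfiesGlRel p fun i j => (-1 : ℂ) ^ (c * (p i + p j)) • gen p i j := by
  intro i j k l
  have h := congrArg ((-1 : ℂ) ^ (c * (p i + p j) + c * (p k + p l)) • ·)
    (satisfiesGlRel_gen (p := p) i j k l)
  convert h using 1
  · simp only [smul_mul_smul_comm, ← pow_add, smul_sub, smul_smul, mul_comm]
  · simp only [smul_sub]
    congr 1
    · split_ifs with hjk
      · subst hjk
        congr 1
        exact neg_one_pow_congr (by simp only [Nat.even_add, Nat.even_mul]; tauto)
      · simp
    · rw [smul_comm]
      congr 1
      split_ifs with hli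
      · subst hli
        congr 1
        exact neg_one_pow_congr (by simp only [Nat.even_add, Nat.even_mul]; tauto)
      · simp

variable (p) in
/-- The sign automorphism multiplying a homogeneous element of parity `ε` by `(-1) ^ (c * ε)`. -/
def twist (c : ℕ) : UEA ι p →ₐ[ℂ] UEA ι p := lift _ (satisfiesGlRel_sign_smul_gen p c)

@[simp]
theorem twist_gen (c : ℕ) (i j : ι) :
    twist p c (gen p i j) = (-1 : ℂ) ^ (c * (p i + p j)) • gen p i j := by
  simp [twist]

theorem twist_twist (c d : ℕ) (u : UEA ι p) : twist p c (twist p d u) = twist p (c + d) u := by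
  refine DFunLike.congr_fun (f := (twist p c).comp (twist p d)) (algHom_ext fun i j => ?_) u
  simp [smul_smul, ← pow_add, add_mul, add_comm]

theorem twist_of_even {c : ℕ} (hc : Even c) (u : UEA ι p) : twist p c u = u := by
  refine DFunLike.congr_fun (g := AlgHom.id ℂ _) (algHom_ext fun i j => ?_) u
  simp [(hc.mul_right _).neg_one_pow]

variable [Fintype ι]

theorem satisfiesGlRel_single : SatisfiesGlRel p fun i j : ι => Matrix.single i j (1 : A) := by
  intro i j k l
  by_cases hjk : j = k <;> by_cases hli : l = i <;>
    simp [hjk, hli, Matrix.single_mul_single_of_ne]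

omit [Algebra ℂ A] in
theorem single_mul_diagonal (i j : ι) (d : ι → A) :
    Matrix.single i j 1 * Matrix.diagonal d = Matrix.single i j (d j) := by
  ext a b
  by_cases hb : j = b <;> simp [Matrix.mul_diagonal, Matrix.single_apply, hb]

omit [Algebra ℂ A] in
theorem diagonal_mul_single (i j : ι) (d : ι → A) :
    Matrix.diagonal d * Matrix.single i j 1 = Matrix.single i j (d i) := by
  ext a b
  by_cases ha : i = a <;> simp [Matrix.diagonal_mul, Matrix.single_apply, ha]

variable (ι p) in
theorem satisfiesGlRel_natCoaction : SatisfiesGlRel p fun i j =>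
    Matrix.single i j 1 + Matrix.diagonal fun a => twist p (p a) (gen p i j) := by
  refine satisfiesGlRel_single.add (satisfiesGlRel_gen.map
    ((Matrix.diagonalAlgHom ℂ).comp (AlgHom.pi fun a => twist p (p a)))) fun i j k l => ?_
  have hsign : (-1 : ℂ) ^ ((p i + p j) * (p k + p l)) * (-1) ^ (p i * (p k + p l)) =
      (-1) ^ (p j * (p k + p l)) := by
    rw [← pow_add]
    exact neg_one_pow_congr (by simp only [Nat.even_add, Nat.even_mul]; tauto)
  change Matrix.single i j 1 * Matrix.diagonal (fun a => twist p (p a) (gen p k l)) =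
    _ • (Matrix.diagonal (fun a => twist p (p a) (gen p k l)) * _)
  rw [single_mul_diagonal, diagonal_mul_single, Matrix.smul_single, twist_gen, twist_gen,
    smul_smul, hsign]

variable (p) in
/-- The coaction of the enveloping superalgebra on the natural representation with basis `ι`: on
the generators it is `e_ij ↦ E_ij ⊗ 1 + 1 ⊗ e_ij`, where the Koszul sign of the second summand
appears as a `twist` of the diagonal entries. -/
def natCoaction : UEA ι p →ₐ[ℂ] Matrix ι ι (UEA ι p) := lift _ (satisfiesGlRel_natCoaction ι p)

@[simp]
theorem natCoaction_gen (i j : ι) : natCoaction p (gen p i j) =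
    Matrix.single i j 1 + Matrix.diagonal fun a => twist p (p a) (gen p i j) := by
  simp only [natCoaction, lift_gen]

variable (p) in
/-- The coordinate derivation `∂_x` of the enveloping superalgebra dual to the generator `e_x`: to
leading order in the degree of a word it removes one letter `x`. It is read off the matrix
coefficient `x` of `natCoaction`. -/
def coordDeriv (x : ι × ι) : UEA ι p →ₗ[ℂ] UEA ι p :=
  (twist p (p x.1)).toLinearMap ∘ₗ Matrix.entryLinearMap ℂ (UEA ι p) x.1 x.2 ∘ₗ
    (natCoaction p).toLinearMap - if x.1 = x.2 then LinearMap.id else 0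

theorem twist_natCoaction_apply (x : ι × ι) (u : UEA ι p) :
    twist p (p x.1) (natCoaction p u x.1 x.2) =
      coordDeriv p x u + if x.1 = x.2 then u else 0 := by
  by_cases h : x.1 = x.2 <;> simp [coordDeriv, h]

theorem natCoaction_apply (x : ι × ι) (u : UEA ι p) :
    natCoaction p u x.1 x.2 =
      twist p (p x.1) (coordDeriv p x u + if x.1 = x.2 then u else 0) := by
  rw [← twist_natCoaction_apply, twist_twist, twist_of_even ⟨_, rfl⟩]

theorem coordDeriv_one (x : ι × ι) : coordDeriv p x 1 = 0 := by
  by_cases h : x.1 = x.2 <;> simp [coordDeriv, h]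

theorem natCoaction_gen_mul_apply (x : ι × ι) (u : UEA ι p) (a b : ι) :
    natCoaction p (gen p x.1 x.2 * u) a b =
      twist p (p a) (gen p x.1 x.2) * natCoaction p u a b +
        if a = x.1 then natCoaction p u x.2 b else 0 := by
  rw [map_mul, natCoaction_gen, add_mul, Matrix.add_apply, Matrix.diagonal_mul, add_comm]
  congr 1
  split_ifs with h
  · rw [h, Matrix.single_mul_apply_same, one_mul]
  · exact Matrix.single_mul_apply_of_ne _ _ _ _ _ h _

theorem coordDeriv_gen_mul (k x : ι × ι) (u : UEA ι p) :
    coordDeriv p k (gen p x.1 x.2 * u) = gen p x.1 x.2 * coordDeriv p k u +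
      if k.1 = x.1 then twist p (p x.1 + p x.2)
        (coordDeriv p (x.2, k.2) u + if x.2 = k.2 then u else 0) else 0 := by
  have h := congrArg (twist p (p k.1)) (natCoaction_gen_mul_apply x u k.1 k.2)
  rw [twist_natCoaction_apply, natCoaction_apply k, natCoaction_apply (x.2, k.2)] at h
  simp only [map_add, map_mul, twist_twist, twist_of_even (Even.add_self _)] at h
  rw [mul_add, add_right_comm] at h
  refine add_right_cancel (b := if k.1 = k.2 then gen p x.1 x.2 * u else 0) (h.trans ?_)
  rw [mul_ite, mul_zero]
  by_cases hk : k.1 = x.1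
  · rw [if_pos hk, if_pos hk, ← map_add, twist_twist, hk]
  · rw [if_neg hk, if_neg hk, map_zero]

end CoordinateDerivations

section LeadingTerms

variable {ι : Type} [DecidableEq ι] {p : ι → ℕ}

theorem twist_word (c : ℕ) (l : List (ι × ι)) :
    twist p c (word p l) = (-1 : ℂ) ^ (c * (l.map fun x => p x.1 + p x.2).sum) • word p l := by
  induction l with
  | nil => simp
  | cons x l ih =>
    rw [word_cons, map_mul, twist_gen, ih, smul_mul_smul_comm, ← pow_add, ← mul_add,
      List.map_cons, List.sum_cons]

theorem twist_mem_wordSpan (c : ℕ) {s : Set (List (ι × ι))} {u : UEA ι p}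
    (hu : u ∈ wordSpan p s) : twist p c u ∈ wordSpan p s := by
  refine apply_mem_of_mem_wordSpan (twist p c).toLinearMap (fun l hl => ?_) hu
  rw [AlgHom.toLinearMap_apply, twist_word]
  exact Submodule.smul_mem _ _ (word_mem_wordSpan hl)

theorem gen_mul_mem_degreeLT (x : ι × ι) {d : ℕ} {u : UEA ι p} (hu : u ∈ degreeLT p d) :
    gen p x.1 x.2 * u ∈ degreeLT p (d + 1) :=
  gen_mul_mem_wordSpan x (fun _ hl => Nat.succ_lt_succ hl) hu

variable [Fintype ι]

theorem coordDeriv_word_mem (k : ι × ι) (l : List (ι × ι)) : coordDeriv p k (word p l) ∈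
    wordSpan p {l' | (k :: l').Perm l ∨ l'.length + 1 < l.length} := by
  induction l generalizing k with
  | nil => simp [coordDeriv_one]
  | cons x l ih =>
    rw [word_cons, coordDeriv_gen_mul]
    refine add_mem (gen_mul_mem_wordSpan x ?_ (ih k)) ?_
    · rintro l' (h | h)
      · exact Or.inl ((List.Perm.swap x k l').trans (h.cons x))
      · exact Or.inr (Nat.succ_lt_succ h)
    · split_ifs with h₁ h₂
      · obtain rfl : k = x := Prod.ext h₁ h₂.symm
        refine twist_mem_wordSpan _ (add_mem (wordSpan_mono ?_ (ih _))
          (word_mem_wordSpan (Or.inl (List.Perm.refl _))))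
        rintro l' (h | h)
        · exact Or.inr (by simp [← h.length_eq])
        · exact Or.inr (by simp; lia)
      · refine twist_mem_wordSpan _ (add_mem (wordSpan_mono ?_ (ih _)) (zero_mem _))
        rintro l' (h | h)
        · exact Or.inr (by simp [← h.length_eq])
        · exact Or.inr (by simp; lia)
      · exact zero_mem _

theorem coordDeriv_word_mem_degreeLT (k : ι × ι) (l : List (ι × ι)) :
    coordDeriv p k (word p l) ∈ degreeLT p l.length := by
  refine wordSpan_mono ?_ (coordDeriv_word_mem k l)
  rintro l' (h | h)
  · exact h.length_eq ▸ Nat.lt_succ_self _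
  · exact (Nat.lt_succ_self _).trans h

theorem coordDeriv_gen_mul_word_sub_mem (k x : ι × ι) (l : List (ι × ι)) :
    coordDeriv p k (gen p x.1 x.2 * word p l) - (gen p x.1 x.2 * coordDeriv p k (word p l) +
      if k = x then twist p (p x.1 + p x.2) (word p l) else 0) ∈ degreeLT p l.length := by
  have hlow : (if k.1 = x.1 then twist p (p x.1 + p x.2) (coordDeriv p (x.2, k.2) (word p l))
      else 0) ∈ degreeLT p l.length := by
    split_ifs
    · exact twist_mem_wordSpan _ (coordDeriv_word_mem_degreeLT _ l)
    · exact zero_mem _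
  convert hlow using 1
  rw [coordDeriv_gen_mul, add_sub_add_left_eq_sub]
  by_cases h₁ : k.1 = x.1 <;> by_cases h₂ : x.2 = k.2 <;>
    simp [h₁, h₂, Prod.ext_iff, eq_comm (a := k.2)]

/-- Up to lower order terms, `e_k ∂_k` is an Euler operator counting occurrences of `k`. -/
theorem gen_mul_coordDeriv_word_sub_mem {k : ι × ι} {l : List (ι × ι)}
    (h : Even (p k.1 + p k.2) ∨ k ∉ l) :
    gen p k.1 k.2 * coordDeriv p k (word p l) - (l.count k : ℂ) • word p l ∈
      degreeLT p l.length := by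
  induction l with
  | nil => simp [coordDeriv_one]
  | cons x l ih =>
    have hl : Even (p k.1 + p k.2) ∨ k ∉ l := h.imp_right fun h hk => h (List.mem_cons_of_mem x hk)
    have hsign : (-1 : ℂ) ^ ((p k.1 + p k.2) * (p x.1 + p x.2)) * l.count k = l.count k := by
      rcases hl with hk | hk
      · rw [(hk.mul_right _).neg_one_pow, one_mul]
      · rw [List.count_eq_zero_of_not_mem hk, Nat.cast_zero, mul_zero]
    have hderiv := gen_mul_mem_degreeLT k (coordDeriv_gen_mul_word_sub_mem (p := p) k x l)
    have hswap := gen_mul_gen_mul_sub_mem (p := p) k x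
      (fun _ => gen_mul_mem_degreeLT (k.1, x.2) (coordDeriv_word_mem_degreeLT k l))
      (fun _ => gen_mul_mem_degreeLT (x.1, k.2) (coordDeriv_word_mem_degreeLT k l))
    have heuler := Submodule.smul_mem _ ((-1 : ℂ) ^ ((p k.1 + p k.2) * (p x.1 + p x.2)))
      (gen_mul_mem_degreeLT x (ih hl))
    rw [mul_sub, mul_smul_comm, smul_sub, smul_smul, hsign] at heuler
    have hnew : gen p k.1 k.2 * (if k = x then twist p (p x.1 + p x.2) (word p l) else 0) =
        (if x == k then 1 else 0 : ℂ) • (gen p x.1 x.2 * word p l) := by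
      by_cases hk : k = x
      · subst hk
        have heven : Even (p k.1 + p k.2) := h.resolve_right fun h => h List.mem_cons_self
        simp [twist_of_even heven]
      · simp [hk, Ne.symm hk]
    rw [List.length_cons]
    convert add_mem hderiv (add_mem hswap heuler) using 1
    rw [word_cons, List.count_cons]
    simp only [mul_sub, mul_add, hnew]
    push_cast
    module

theorem exists_coordDeriv_word_cons_sub_smul_mem {k : ι × ι} {l : List (ι × ι)}
    (h : Even (p k.1 + p k.2) ∨ k ∉ l) : ∃ c : ℂ, c ≠ 0 ∧
      coordDeriv p k (word p (k :: l)) - c • word p l ∈ degreeLT p l.length := by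
  have hderiv := coordDeriv_gen_mul_word_sub_mem (p := p) k k l
  have hsum := add_mem hderiv (gen_mul_coordDeriv_word_sub_mem h)
  rw [if_pos rfl, sub_add_eq_sub_sub_swap, ← word_cons] at hsum
  rcases h with hk | hk
  · refine ⟨l.count k + 1, Nat.cast_add_one_ne_zero _, ?_⟩
    rw [twist_of_even hk] at hsum
    convert hsum using 1
    module
  · rw [twist_word, List.count_eq_zero_of_not_mem hk, Nat.cast_zero, zero_smul, sub_zero,
      sub_add_cancel] at hsum
    exact ⟨_, pow_ne_zero _ (neg_ne_zero.2 one_ne_zero), hsum⟩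

variable (p) in
/-- The augmentation of the enveloping superalgebra. -/
def counit : UEA ι p →ₐ[ℂ] ℂ := lift (fun _ _ => 0) fun _ _ _ _ => by simp

omit [Fintype ι] in
@[simp]
theorem counit_gen (i j : ι) : counit p (gen p i j) = 0 :=
  lift_gen _ _ i j

variable (p) in
/-- The coefficient functional `ε ∘ ∂_{k_r} ∘ ⋯ ∘ ∂_{k_1}` attached to a list of letters. -/
def coeff : List (ι × ι) → UEA ι p →ₗ[ℂ] ℂ
  | [] => (counit p).toLinearMap
  | k :: ks => coeff ks ∘ₗ coordDeriv p k

theorem coeff_word_eq_zero {ks l : List (ι × ι)} (hlen : l.length ≤ ks.length)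
    (hperm : ¬ ks.Perm l) : coeff p ks (word p l) = 0 := by
  induction ks generalizing l with
  | nil => exact absurd (List.length_eq_zero_iff.1 (Nat.le_zero.1 hlen) ▸ List.Perm.nil) hperm
  | cons k ks ih =>
    refine apply_mem_of_mem_wordSpan (coeff p ks) (N := ⊥) ?_ (coordDeriv_word_mem k l)
    rintro l' (h | h)
    · refine ih (Nat.le_of_succ_le_succ ?_) fun h' => hperm ((h'.cons k).trans h)
      exact h.length_eq.trans_le hlen
    · have : l'.length < ks.length := Nat.lt_of_succ_lt_succ (h.trans_le hlen)
      exact ih this.le fun h' => this.ne' h'.length_eq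

theorem coeff_eq_zero_of_mem {ks : List (ι × ι)} {u : UEA ι p}
    (hu : u ∈ degreeLT p ks.length) : coeff p ks u = 0 :=
  apply_mem_of_mem_wordSpan (coeff p ks) (N := ⊥)
    (fun _ hl => coeff_word_eq_zero (le_of_lt hl) fun h => (ne_of_lt hl) h.length_eq.symm) hu

theorem coeff_word_self_ne_zero {l : List (ι × ι)}
    (hl : Admissible p (l : Multiset (ι × ι))) : coeff p l (word p l) ≠ 0 := by
  induction l with
  | nil => simp [coeff]
  | cons k l ih =>
    have hk : Even (p k.1 + p k.2) ∨ k ∉ l := by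
      refine or_iff_not_imp_left.2 fun hk hmem => ?_
      have hcount := hl k (Nat.not_even_iff_odd.1 hk)
      rw [← Multiset.cons_coe, Multiset.count_cons_self] at hcount
      exact (Multiset.count_pos.2 (Multiset.mem_coe.2 hmem)).ne' (by lia)
    obtain ⟨c, hc, hsub⟩ := exists_coordDeriv_word_cons_sub_smul_mem (p := p) hk
    have hval : coeff p (k :: l) (word p (k :: l)) = c * coeff p l (word p l) := by
      simpa [coeff, sub_eq_zero] using coeff_eq_zero_of_mem hsub
    rw [hval]
    exact mul_ne_zero hc (ih (hl.mono (Multiset.le_cons_self _ k)))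

theorem eq_zero_of_forall_coeff_linearCombination_eq_zero
    {ord : Multiset (ι × ι) → List (ι × ι)} (hord : ∀ β, (ord β : Multiset (ι × ι)) = β)
    {c : {β // Admissible p β} →₀ ℂ}
    (h : ∀ ks, coeff p ks (Finsupp.linearCombination ℂ
      (fun β : {β // Admissible p β} => word p (ord β)) c) = 0) :
    c = 0 := by
  by_contra hc
  obtain ⟨β, hβ, hmax⟩ := c.support.exists_max_image (fun β => β.1.card)
    (Finsupp.support_nonempty_iff.2 hc)
  have hother : ∀ γ ∈ c.support, γ ≠ β → c γ • coeff p (ord β) (word p (ord γ)) = 0 := by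
    intro γ hγ hne
    have hlen : (ord γ).length ≤ (ord β).length := by
      simpa only [← Multiset.coe_card, hord] using hmax γ hγ
    have hperm : ¬ (ord β).Perm (ord γ) := fun hp => hne <| Subtype.ext <| by
      rw [← hord γ, ← hord β, Multiset.coe_eq_coe.2 hp]
    rw [coeff_word_eq_zero hlen hperm, smul_zero]
  have hlead : c β • coeff p (ord β) (word p (ord β)) = 0 := by
    rw [← h (ord β), Finsupp.linearCombination_apply, Finsupp.sum, map_sum]
    simp only [map_smul]
    exact (Finset.sum_eq_single_of_mem β hβ hother).symm
  have hadm : Admissible p (ord β : Multiset (ι × ι)) := (hord β).symm ▸ β.2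
  exact (smul_ne_zero (Finsupp.mem_support_iff.1 hβ) (coeff_word_self_ne_zero hadm)) hlead

/-- The Poincaré–Birkhoff–Witt basis of the enveloping superalgebra, formed by the words in which
the letters of an admissible multiset are ordered by a given function `ord`. -/
def pbwBasis (ord : Multiset (ι × ι) → List (ι × ι))
    (hord : ∀ β, (ord β : Multiset (ι × ι)) = β) :
    Module.Basis {β // Admissible p β} ℂ (UEA ι p) :=
  Module.Basis.mk (v := fun β : {β // Admissible p β} => word p (ord β))
    (linearIndependent_iff.2 fun c hc =>
      eq_zero_of_forall_coeff_linearCombination_eq_zero hord fun ks => by rw [hc, map_zero])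
    (by
      rw [← wordSpan_admissible_eq_top hord, wordSpan, Set.image_image, Set.image_eq_range]
      rfl)

@[simp]
theorem pbwBasis_apply (ord : Multiset (ι × ι) → List (ι × ι))
    (hord : ∀ β, (ord β : Multiset (ι × ι)) = β) (β : {β // Admissible p β}) :
    pbwBasis ord hord β = word p (ord β) :=
  Module.Basis.mk_apply _ _ β

theorem eq_zero_of_forall_coeff_eq_zero {u : UEA ι p} (h : ∀ ks, coeff p ks u = 0) : u = 0 := by
  let b := pbwBasis (p := p) Multiset.toList Multiset.coe_toList
  refine b.repr.map_eq_zero_iff.1 <|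
    eq_zero_of_forall_coeff_linearCombination_eq_zero Multiset.coe_toList fun ks => ?_
  rw [← h ks, ← funext (pbwBasis_apply (p := p) Multiset.toList Multiset.coe_toList),
    b.linearCombination_repr]

end LeadingTerms

section HarishChandraProjection

variable {ι : Type} [DecidableEq ι] {p : ι → ℕ} {rk : ι → ℕ}

theorem gen_mul_gen_diag (i j k : ι) : gen p i j * gen p k k =
    gen p k k * gen p i j +
      ((if j = k then 1 else 0) - if k = i then 1 else 0 : ℂ) • gen p i j := by
  have h := satisfiesGlRel_gen (p := p) i j k k
  rw [((Even.add_self (p k)).mul_left _).neg_one_pow, one_smul, one_smul, sub_eq_iff_eq_add'] at h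
  rw [h]
  congr 1
  split_ifs <;> subst_vars <;> module

theorem word_eq_of_perm_of_diag {l l' : List (ι × ι)} (h : l.Perm l')
    (hl : ∀ x ∈ l, x.1 = x.2) : word p l = word p l' := by
  refine (h.map _).prod_eq' (List.pairwise_map.2 (List.pairwise_of_forall_mem_list ?_))
  rintro ⟨i, i'⟩ hi ⟨j, j'⟩ hj
  obtain rfl : i = i' := hl _ hi
  obtain rfl : j = j' := hl _ hj
  exact gen_diag_mul_comm i j

variable (p rk) in
/-- The complement `𝔫⁻U + U𝔫⁺` of the Cartan part in the triangular decomposition of the enveloping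
superalgebra, where `e_ij` is a raising operator when `rk i < rk j`. -/
def offCartan : Submodule ℂ (UEA ι p) :=
  Submodule.span ℂ ({u | ∃ i j v, rk j < rk i ∧ u = gen p i j * v} ∪
    {u | ∃ i j v, rk i < rk j ∧ u = v * gen p i j})

theorem gen_mul_mem_offCartan {i j : ι} (h : rk j < rk i) (v : UEA ι p) :
    gen p i j * v ∈ offCartan p rk :=
  Submodule.subset_span (Or.inl ⟨i, j, v, h, rfl⟩)

theorem mul_gen_mem_offCartan {i j : ι} (h : rk i < rk j) (v : UEA ι p) :
    v * gen p i j ∈ offCartan p rk :=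
  Submodule.subset_span (Or.inr ⟨i, j, v, h, rfl⟩)

theorem apply_eq_zero_of_mem_offCartan {M : Type*} [AddCommGroup M] [Module ℂ M]
    (f : UEA ι p →ₗ[ℂ] M) (hlower : ∀ i j v, rk j < rk i → f (gen p i j * v) = 0)
    (hupper : ∀ i j v, rk i < rk j → f (v * gen p i j) = 0) {u : UEA ι p}
    (hu : u ∈ offCartan p rk) : f u = 0 := by
  refine (Submodule.span_le (p := LinearMap.ker f)).2 ?_ hu
  rintro _ (⟨i, j, v, h, rfl⟩ | ⟨i, j, v, h, rfl⟩)
  · exact hlower i j v h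
  · exact hupper i j v h

theorem mul_gen_diag_mem_offCartan {u : UEA ι p} (hu : u ∈ offCartan p rk) (k : ι) :
    u * gen p k k ∈ offCartan p rk := by
  refine (Submodule.span_le (p := (offCartan p rk).comap (LinearMap.mulRight ℂ (gen p k k)))).2
    ?_ hu
  rintro _ (⟨i, j, v, h, rfl⟩ | ⟨i, j, v, h, rfl⟩)
  · simpa [mul_assoc] using gen_mul_mem_offCartan h (v * gen p k k)
  · simp only [SetLike.mem_coe, Submodule.mem_comap, LinearMap.mulRight_apply]
    rw [mul_assoc, gen_mul_gen_diag, mul_add, ← mul_assoc, mul_smul_comm]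
    exact add_mem (mul_gen_mem_offCartan h _)
      (Submodule.smul_mem _ _ (mul_gen_mem_offCartan h _))

variable (rk) in
/-- The triangular ordering of a multiset of letters: lowering operators, then diagonal letters,
then raising operators. -/
def triangularList (β : Multiset (ι × ι)) : List (ι × ι) :=
  (β.filter fun x => rk x.2 < rk x.1).toList ++ (β.filter fun x => rk x.1 = rk x.2).toList ++
    (β.filter fun x => rk x.1 < rk x.2).toList

omit [DecidableEq ι] in
theorem coe_triangularList (β : Multiset (ι × ι)) :
    (triangularList rk β : Multiset (ι × ι)) = β := by
  classical
  simp only [triangularList, ← Multiset.coe_add, Multiset.coe_toList]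
  ext x
  simp only [Multiset.count_add, Multiset.count_filter]
  split_ifs <;> lia

omit [DecidableEq ι] in
theorem triangularList_add {γ₁ γ₂ γ₃ : Multiset (ι × ι)} (h₁ : ∀ x ∈ γ₁, rk x.2 < rk x.1)
    (h₂ : ∀ x ∈ γ₂, rk x.1 = rk x.2) (h₃ : ∀ x ∈ γ₃, rk x.1 < rk x.2) :
    triangularList rk (γ₁ + γ₂ + γ₃) = γ₁.toList ++ γ₂.toList ++ γ₃.toList := by
  have hlower : (γ₁ + γ₂ + γ₃).filter (fun x => rk x.2 < rk x.1) = γ₁ := by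
    rw [Multiset.filter_add, Multiset.filter_add, Multiset.filter_eq_self.2 h₁,
      Multiset.filter_eq_nil.2 fun x hx => (h₂ x hx).not_gt,
      Multiset.filter_eq_nil.2 fun x hx => (h₃ x hx).not_gt, add_zero, add_zero]
  have hdiag : (γ₁ + γ₂ + γ₃).filter (fun x => rk x.1 = rk x.2) = γ₂ := by
    rw [Multiset.filter_add, Multiset.filter_add, Multiset.filter_eq_self.2 h₂,
      Multiset.filter_eq_nil.2 fun x hx => (h₁ x hx).ne',
      Multiset.filter_eq_nil.2 fun x hx => (h₃ x hx).ne, add_zero, zero_add]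
  have hupper : (γ₁ + γ₂ + γ₃).filter (fun x => rk x.1 < rk x.2) = γ₃ := by
    rw [Multiset.filter_add, Multiset.filter_add, Multiset.filter_eq_self.2 h₃,
      Multiset.filter_eq_nil.2 fun x hx => (h₁ x hx).not_gt,
      Multiset.filter_eq_nil.2 fun x hx => (h₂ x hx).not_lt, zero_add, zero_add]
  rw [triangularList, hlower, hdiag, hupper]

theorem Admissible.add_of_triangular {γ₁ γ₂ γ₃ : Multiset (ι × ι)}
    (hγ₁ : Admissible p γ₁) (hγ₂ : Admissible p γ₂) (hγ₃ : Admissible p γ₃)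
    (h₁ : ∀ x ∈ γ₁, rk x.2 < rk x.1) (h₂ : ∀ x ∈ γ₂, rk x.1 = rk x.2)
    (h₃ : ∀ x ∈ γ₃, rk x.1 < rk x.2) : Admissible p (γ₁ + γ₂ + γ₃) := by
  intro x hx
  have hcount {γ : Multiset (ι × ι)} (h : x ∉ γ) : γ.count x = 0 := Multiset.count_eq_zero.2 h
  rw [Multiset.count_add, Multiset.count_add]
  rcases lt_trichotomy (rk x.1) (rk x.2) with hlt | heq | hgt
  · rw [hcount fun h => (h₁ x h).not_gt hlt, hcount fun h => (h₂ x h).not_lt hlt]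
    simpa using hγ₃ x hx
  · rw [hcount fun h => (h₁ x h).ne' heq, hcount fun h => (h₃ x h).ne heq]
    simpa using hγ₂ x hx
  · rw [hcount fun h => (h₂ x h).not_gt hgt, hcount fun h => (h₃ x h).not_gt hgt]
    simpa using hγ₁ x hx

theorem word_triangularList_mem_offCartan {β : Multiset (ι × ι)}
    (hβ : ¬ ∀ x ∈ β, rk x.1 = rk x.2) : word p (triangularList rk β) ∈ offCartan p rk := by
  push Not at hβ
  obtain ⟨x, hx, hne⟩ := hβ
  rw [triangularList]
  rcases hne.lt_or_gt with hlt | hgt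
  · obtain ⟨l, y, hl⟩ := (List.eq_nil_or_concat
      (β.filter fun x => rk x.1 < rk x.2).toList).resolve_left fun h =>
        List.not_mem_nil (h ▸ Multiset.mem_toList.2 (Multiset.mem_filter.2 ⟨hx, hlt⟩))
    have hy : y ∈ β.filter fun x => rk x.1 < rk x.2 := Multiset.mem_toList.1 (by simp [hl])
    rw [hl, List.concat_eq_append, ← List.append_assoc, word_append, word_cons, word_nil, mul_one]
    exact mul_gen_mem_offCartan (Multiset.mem_filter.1 hy).2 _
  · obtain ⟨y, l, hl⟩ := List.exists_cons_of_ne_nil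
      (l := (β.filter fun x => rk x.2 < rk x.1).toList) fun h =>
        List.not_mem_nil (h ▸ Multiset.mem_toList.2 (Multiset.mem_filter.2 ⟨hx, hgt⟩))
    have hy : y ∈ β.filter fun x => rk x.2 < rk x.1 := Multiset.mem_toList.1 (by simp [hl])
    rw [hl, List.append_assoc, List.cons_append, word_cons]
    exact gen_mul_mem_offCartan (Multiset.mem_filter.1 hy).2 _

variable [Fintype ι]

variable (p rk) in
/-- The Harish-Chandra projection onto the enveloping algebra `ℂ[e_ii : i ∈ ι]` of the Cartan
subalgebra, along `offCartan p rk`. -/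
def hcProj : UEA ι p →ₗ[ℂ] MvPolynomial ι ℂ :=
  (pbwBasis (triangularList rk) coe_triangularList).constr ℂ fun β =>
    if ∀ x ∈ β.1, rk x.1 = rk x.2 then
      MvPolynomial.monomial (Multiset.toFinsupp (β.1.map Prod.fst)) 1 else 0

theorem hcProj_word_triangularList {β : Multiset (ι × ι)} (hβ : Admissible p β) :
    hcProj p rk (word p (triangularList rk β)) = if ∀ x ∈ β, rk x.1 = rk x.2 then
      MvPolynomial.monomial (Multiset.toFinsupp (β.map Prod.fst)) 1 else 0 := by
  have h := (pbwBasis (p := p) (triangularList rk) coe_triangularList).constr_basis ℂ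
    (fun β => if ∀ x ∈ β.1, rk x.1 = rk x.2 then
      (MvPolynomial.monomial (Multiset.toFinsupp (β.1.map Prod.fst)) 1 : MvPolynomial ι ℂ) else 0)
    ⟨β, hβ⟩
  rwa [pbwBasis_apply] at h

theorem hcProj_word_append_eq_zero {γ₁ γ₂ γ₃ : Multiset (ι × ι)}
    (hγ₁ : Admissible p γ₁) (hγ₂ : Admissible p γ₂) (hγ₃ : Admissible p γ₃)
    (h₁ : ∀ x ∈ γ₁, rk x.2 < rk x.1) (h₂ : ∀ x ∈ γ₂, rk x.1 = rk x.2)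
    (h₃ : ∀ x ∈ γ₃, rk x.1 < rk x.2) (hne : γ₁ ≠ 0 ∨ γ₃ ≠ 0) :
    hcProj p rk (word p γ₁.toList * word p γ₂.toList * word p γ₃.toList) = 0 := by
  rw [← word_append, ← word_append, ← triangularList_add h₁ h₂ h₃,
    hcProj_word_triangularList (hγ₁.add_of_triangular hγ₂ hγ₃ h₁ h₂ h₃), if_neg]
  intro h
  rcases hne with hne | hne
  · obtain ⟨x, hx⟩ := Multiset.exists_mem_of_ne_zero hne
    exact (h₁ x hx).ne' (h x (by simp [hx]))
  · obtain ⟨x, hx⟩ := Multiset.exists_mem_of_ne_zero hne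
    exact (h₃ x hx).ne (h x (by simp [hx]))

theorem hcProj_gen_mul_word_triangularList {i j : ι} (h : rk j < rk i) {β : Multiset (ι × ι)}
    (hβ : Admissible p β) : hcProj p rk (gen p i j * word p (triangularList rk β)) = 0 := by
  have : IsTrans ι fun a b => rk b < rk a := ⟨fun _ _ _ hab hbc => hbc.trans hab⟩
  have hlower : ∀ x ∈ (i, j) :: (β.filter fun x => rk x.2 < rk x.1).toList, rk x.2 < rk x.1 := by
    simp [h]
  have hmem := word_mem_wordSpan_admissible (p := p) (Q := fun a b => rk b < rk a)
    Multiset.coe_toList (List.cons_ne_nil _ _) hlower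
  rw [triangularList, word_append, word_append, ← mul_assoc, ← mul_assoc, mul_assoc,
    ← word_cons (i, j), ← LinearMap.mulRight_apply ℂ, ← LinearMap.comp_apply,
    ← Submodule.mem_bot ℂ]
  refine apply_mem_of_mem_wordSpan _ ?_ hmem
  rintro _ ⟨γ, ⟨hγ, hne, hQ⟩, rfl⟩
  rw [Submodule.mem_bot, LinearMap.comp_apply, LinearMap.mulRight_apply, ← mul_assoc]
  exact hcProj_word_append_eq_zero hγ (hβ.mono (Multiset.filter_le _ _))
    (hβ.mono (Multiset.filter_le _ _)) hQ (fun _ hx => (Multiset.mem_filter.1 hx).2)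
    (fun _ hx => (Multiset.mem_filter.1 hx).2) (Or.inl hne)

theorem hcProj_word_triangularList_mul_gen {i j : ι} (h : rk i < rk j) {β : Multiset (ι × ι)}
    (hβ : Admissible p β) : hcProj p rk (word p (triangularList rk β) * gen p i j) = 0 := by
  have : IsTrans ι fun a b => rk a < rk b := ⟨fun _ _ _ hab hbc => hab.trans hbc⟩
  have hupper : ∀ x ∈ (β.filter fun x => rk x.1 < rk x.2).toList ++ [(i, j)],
      rk x.1 < rk x.2 := by
    simp [or_imp, h]
  have hmem := word_mem_wordSpan_admissible (p := p) (Q := fun a b => rk a < rk b)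
    Multiset.coe_toList (by simp) hupper
  have htail : word p (β.filter fun x => rk x.1 < rk x.2).toList * gen p i j =
      word p ((β.filter fun x => rk x.1 < rk x.2).toList ++ [(i, j)]) := by
    rw [word_append, word_cons, word_nil, mul_one]
  rw [triangularList, word_append, mul_assoc, htail, ← LinearMap.mulLeft_apply (R := ℂ),
    ← LinearMap.comp_apply, ← Submodule.mem_bot ℂ]
  refine apply_mem_of_mem_wordSpan _ ?_ hmem
  rintro _ ⟨γ, ⟨hγ, hne, hQ⟩, rfl⟩
  rw [Submodule.mem_bot, LinearMap.comp_apply, LinearMap.mulLeft_apply, word_append]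
  exact hcProj_word_append_eq_zero (hβ.mono (Multiset.filter_le _ _))
    (hβ.mono (Multiset.filter_le _ _)) hγ (fun _ hx => (Multiset.mem_filter.1 hx).2)
    (fun _ hx => (Multiset.mem_filter.1 hx).2) hQ (Or.inr hne)

theorem hcProj_eq_zero_of_mem_offCartan {u : UEA ι p} (hu : u ∈ offCartan p rk) :
    hcProj p rk u = 0 := by
  let b := pbwBasis (p := p) (triangularList rk) coe_triangularList
  refine apply_eq_zero_of_mem_offCartan _ (fun i j v h => ?_) (fun i j v h => ?_) hu
  · exact LinearMap.congr_fun (b.ext (f₁ := hcProj p rk ∘ₗ LinearMap.mulLeft ℂ (gen p i j))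
      (f₂ := 0) fun β => by simpa [b] using hcProj_gen_mul_word_triangularList h β.2) v
  · exact LinearMap.congr_fun (b.ext (f₁ := hcProj p rk ∘ₗ LinearMap.mulRight ℂ (gen p i j))
      (f₂ := 0) fun β => by simpa [b] using hcProj_word_triangularList_mul_gen h β.2) v

theorem hcProj_one : hcProj p rk 1 = 1 := by
  have h := hcProj_word_triangularList (p := p) (rk := rk) (β := 0) (by simp [Admissible])
  simpa [triangularList] using h

theorem hcProj_mul_gen_diag (hrk : Function.Injective rk) (u : UEA ι p) (k : ι) :
    hcProj p rk (u * gen p k k) = hcProj p rk u * MvPolynomial.X k := by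
  let b := pbwBasis (p := p) (triangularList rk) coe_triangularList
  refine LinearMap.congr_fun (b.ext (f₁ := hcProj p rk ∘ₗ LinearMap.mulRight ℂ (gen p k k))
    (f₂ := LinearMap.mulRight ℂ (MvPolynomial.X k) ∘ₗ hcProj p rk) fun β => ?_) u
  simp only [b, pbwBasis_apply, LinearMap.comp_apply, LinearMap.mulRight_apply]
  by_cases hdiag : ∀ x ∈ β.1, rk x.1 = rk x.2
  · have hadm : Admissible p ((k, k) ::ₘ β.1) := fun x hx => by
      have hxk : x ≠ (k, k) := by rintro rfl; exact Nat.not_odd_iff_even.2 (Even.add_self _) hx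
      simpa [Multiset.count_cons_of_ne hxk] using β.2 x hx
    have hperm : (triangularList rk β.1 ++ [(k, k)]).Perm (triangularList rk ((k, k) ::ₘ β.1)) :=
      Multiset.coe_eq_coe.1 (by
        rw [← Multiset.coe_add, coe_triangularList, coe_triangularList, add_comm]; rfl)
    have hmem : ∀ x ∈ triangularList rk β.1 ++ [(k, k)], x.1 = x.2 := fun x hx => by
      rw [← Multiset.mem_coe, ← Multiset.coe_add, coe_triangularList] at hx
      rcases Multiset.mem_add.1 hx with hx | hx
      · exact hrk (hdiag x hx)
      · simp_all
    have hword : word p (triangularList rk β.1) * gen p k k =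
        word p (triangularList rk ((k, k) ::ₘ β.1)) := by
      rw [← word_eq_of_perm_of_diag hperm hmem, word_append, word_cons, word_nil, mul_one]
    rw [hword, hcProj_word_triangularList hadm, hcProj_word_triangularList β.2, if_pos hdiag,
      if_pos (by simpa using hdiag), MvPolynomial.X, MvPolynomial.monomial_mul, mul_one,
      Multiset.map_cons, ← Multiset.singleton_add, map_add, Multiset.toFinsupp_singleton, add_comm]
  · have hmem : word p (triangularList rk β.1) ∈ offCartan p rk :=
      word_triangularList_mem_offCartan hdiag
    rw [hcProj_eq_zero_of_mem_offCartan (mul_gen_diag_mem_offCartan hmem k),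
      hcProj_eq_zero_of_mem_offCartan hmem, zero_mul]

theorem mem_offCartan_of_hcProj_eq_zero (hrk : Function.Injective rk) {u : UEA ι p}
    (hu : hcProj p rk u = 0) : u ∈ offCartan p rk := by
  let b := pbwBasis (p := p) (triangularList rk) coe_triangularList
  let σ : MvPolynomial ι ℂ →ₗ[ℂ] UEA ι p := (MvPolynomial.basisMonomials ι ℂ).constr ℂ fun s =>
    word p (triangularList rk (s.toMultiset.map fun i => (i, i)))
  have hσ : (offCartan p rk).mkQ ∘ₗ (LinearMap.id - σ ∘ₗ hcProj p rk) = 0 := b.ext fun β => by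
    simp only [b, pbwBasis_apply, LinearMap.comp_apply, LinearMap.sub_apply, LinearMap.id_apply,
      hcProj_word_triangularList β.2, LinearMap.zero_apply, Submodule.mkQ_apply,
      Submodule.Quotient.mk_eq_zero]
    split_ifs with hdiag
    · have hβ : (β.1.map Prod.fst).map (fun i => (i, i)) = β.1 := by
        rw [Multiset.map_map]
        refine (Multiset.map_congr rfl fun x hx => ?_).trans (Multiset.map_id _)
        exact Prod.ext rfl (hrk (hdiag x hx))
      have hσβ := (MvPolynomial.basisMonomials ι ℂ).constr_basis ℂ
        (fun s => word p (triangularList rk (s.toMultiset.map fun i => (i, i))))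
        (Multiset.toFinsupp (β.1.map Prod.fst))
      rw [MvPolynomial.coe_basisMonomials, Multiset.toFinsupp_toMultiset, hβ] at hσβ
      simp [σ, hσβ]
    · simpa using word_triangularList_mem_offCartan hdiag
  have h := LinearMap.congr_fun hσ u
  simpa [hu, Submodule.Quotient.mk_eq_zero] using h

end HarishChandraProjection

section UnitaryRepresentations

open scoped ComplexOrder Matrix

variable {S : Type} [Fintype S] [DecidableEq S]

variable {ι : Type} [DecidableEq ι] {p : ι → ℕ} {rk : ι → ℕ} {B : UEA ι p →ₐ[ℂ] Matrix S S ℂ}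

variable (rk) in
/-- A finite-dimensional matrix representation in which the adjoint of `e_ij` is `e_ji`, and whose
basis vectors have heights that the raising operators `e_ij`, `rk i < rk j`, lower strictly. -/
structure IsUnitaryRep (B : UEA ι p →ₐ[ℂ] Matrix S S ℂ) : Prop where
  conjTranspose_gen : ∀ i j, (B (gen p i j))ᴴ = B (gen p j i)
  exists_height : ∃ h : S → ℕ, ∀ i j, rk i < rk j → ∀ s t, B (gen p i j) s t ≠ 0 → h s < h t

variable (rk) in
theorem isUnitaryRep_counit :
    IsUnitaryRep rk ((Matrix.scalarAlgHom Unit ℂ).comp (counit p)) where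
  conjTranspose_gen i j := by simp
  exists_height := ⟨0, by simp⟩

theorem IsUnitaryRep.comp_twist (hB : IsUnitaryRep rk B) (c : ℕ) :
    IsUnitaryRep rk (B.comp (twist p c)) where
  conjTranspose_gen i j := by
    simp [Matrix.conjTranspose_smul, hB.conjTranspose_gen, add_comm (p i)]
  exists_height := by
    obtain ⟨h, hh⟩ := hB.exists_height
    refine ⟨h, fun i j hij s t hst => hh i j hij s t fun h0 => hst ?_⟩
    simp [h0]

variable [Fintype ι]

/-- The tensor product of the natural representation with a matrix representation. -/
def natTensor (B : UEA ι p →ₐ[ℂ] Matrix S S ℂ) : UEA ι p →ₐ[ℂ] Matrix (ι × S) (ι × S) ℂ :=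
  (Matrix.compAlgEquiv ι S ℂ ℂ).toAlgHom.comp (B.mapMatrix.comp (natCoaction p))

theorem natTensor_apply (u : UEA ι p) (a b : ι) (s t : S) :
    natTensor B u (a, s) (b, t) = B (natCoaction p u a b) s t :=
  rfl

theorem natTensor_gen_apply (i j a b : ι) (s t : S) :
    natTensor B (gen p i j) (a, s) (b, t) =
      (if i = a ∧ j = b ∧ s = t then 1 else 0) +
        if a = b then (-1) ^ (p a * (p i + p j)) * B (gen p i j) s t else 0 := by
  rw [natTensor_apply, natCoaction_gen, Matrix.add_apply, map_add, Matrix.add_apply]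
  congr 1
  · by_cases h : i = a ∧ j = b
    · simp [h, Matrix.one_apply]
    · simp [← and_assoc, h]
  · by_cases h : a = b
    · subst h; simp
    · simp [h]

theorem IsUnitaryRep.natTensor (hB : IsUnitaryRep rk B) : IsUnitaryRep rk (natTensor B) where
  conjTranspose_gen i j := by
    ext ⟨a, s⟩ ⟨b, t⟩
    have hst : star (B (gen p i j) t s) = B (gen p j i) s t :=
      congrFun (congrFun (hB.conjTranspose_gen i j) s) t
    rw [Matrix.conjTranspose_apply, natTensor_gen_apply, natTensor_gen_apply, star_add]
    congr 1
    · rw [apply_ite star, star_one, star_zero]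
      congr 1
      grind
    · by_cases h : a = b
      · subst h; simp [← hst, add_comm (p i)]
      · simp [h, Ne.symm h]
  exists_height := by
    obtain ⟨h, hh⟩ := hB.exists_height
    refine ⟨fun x => rk x.1 + h x.2, ?_⟩
    rintro i j hij ⟨a, s⟩ ⟨b, t⟩ hne
    rw [natTensor_gen_apply] at hne
    by_cases hsingle : i = a ∧ j = b ∧ s = t
    · obtain ⟨rfl, rfl, rfl⟩ := hsingle
      exact Nat.add_lt_add_right hij _
    · rw [if_neg hsingle, zero_add, ne_eq, ite_eq_right_iff, Classical.not_imp] at hne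
      obtain ⟨rfl, hne⟩ := hne
      exact Nat.add_lt_add_left (hh i j hij s t (right_ne_zero_of_mul hne)) _

omit [Fintype ι] in
theorem eq_zero_of_forall_isUnitaryRep [Finite ι] {u : UEA ι p}
    (hu : ∀ (S : Type) [Fintype S] [DecidableEq S] (B : UEA ι p →ₐ[ℂ] Matrix S S ℂ),
      IsUnitaryRep rk B → B u = 0) : u = 0 := by
  have := Fintype.ofFinite ι
  refine eq_zero_of_forall_coeff_eq_zero fun ks => ?_
  induction ks generalizing u with
  | nil => simpa [coeff] using congrFun (congrFun (hu Unit _ (isUnitaryRep_counit rk)) ()) ()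
  | cons k _ ih =>
    refine ih fun S _ _ B hB => ?_
    have hentry : B (twist p (p k.1) (natCoaction p u k.1 k.2)) = 0 := by
      ext s t
      exact congrFun (congrFun (hu _ _ (hB.comp_twist (p k.1)).natTensor) (k.1, s)) (k.2, t)
    rw [twist_natCoaction_apply, map_add] at hentry
    simpa [apply_ite B, hu S B hB] using hentry

end UnitaryRepresentations

section HarishChandraInjectivity

open scoped ComplexOrder Matrix

variable {S : Type} [Fintype S]

theorem star_dotProduct_mulVec (M : Matrix S S ℂ) (x y : S → ℂ) :
    star y ⬝ᵥ (M *ᵥ x) = star (Mᴴ *ᵥ y) ⬝ᵥ x := by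
  rw [Matrix.star_mulVec, Matrix.conjTranspose_conjTranspose, Matrix.dotProduct_mulVec]

variable [DecidableEq S] {ι : Type} [DecidableEq ι] {p : ι → ℕ} {rk : ι → ℕ}
  {B : UEA ι p →ₐ[ℂ] Matrix S S ℂ}

variable (rk) in
/-- The highest weight (singular) vectors of a matrix representation: those killed by the raising
operators. -/
def IsSingular (B : UEA ι p →ₐ[ℂ] Matrix S S ℂ) (x : S → ℂ) : Prop :=
  ∀ i j, rk i < rk j → B (gen p i j) *ᵥ x = 0

theorem IsSingular.mulVec {x : S → ℂ} (hx : IsSingular rk B x) {M : Matrix S S ℂ}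
    (hM : ∀ i j, Commute M (B (gen p i j))) : IsSingular rk B (M *ᵥ x) := fun i j hij => by
  rw [Matrix.mulVec_mulVec, ← hM i j, ← Matrix.mulVec_mulVec, hx i j hij, Matrix.mulVec_zero]

theorem IsUnitaryRep.star_dotProduct_mulVec_eq_zero (hB : IsUnitaryRep rk B) {u : UEA ι p}
    (hu : u ∈ offCartan p rk) {x y : S → ℂ} (hx : IsSingular rk B x) (hy : IsSingular rk B y) :
    star y ⬝ᵥ (B u *ᵥ x) = 0 := by
  let f : UEA ι p →ₗ[ℂ] ℂ :=
    { toFun := fun v => star y ⬝ᵥ (B v *ᵥ x)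
      map_add' := fun v w => by rw [map_add, Matrix.add_mulVec, dotProduct_add]
      map_smul' := fun c v => by rw [map_smul, Matrix.smul_mulVec, dotProduct_smul]; rfl }
  refine apply_eq_zero_of_mem_offCartan f (fun i j v hij => ?_) (fun i j v hij => ?_) hu
  · change star y ⬝ᵥ (B (gen p i j * v) *ᵥ x) = 0
    rw [map_mul, ← Matrix.mulVec_mulVec, star_dotProduct_mulVec, hB.conjTranspose_gen, hy j i hij,
      star_zero, zero_dotProduct]
  · change star y ⬝ᵥ (B (v * gen p i j) *ᵥ x) = 0
    rw [map_mul, ← Matrix.mulVec_mulVec, hx i j hij, Matrix.mulVec_zero, dotProduct_zero]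

theorem IsUnitaryRep.commute_conjTranspose (hB : IsUnitaryRep rk B) {z : UEA ι p}
    (hz : z ∈ Subalgebra.center ℂ (UEA ι p)) (i j : ι) : Commute (B z)ᴴ (B (gen p i j)) := by
  rw [← hB.conjTranspose_gen j i, Commute, SemiconjBy, ← Matrix.conjTranspose_mul,
    ← Matrix.conjTranspose_mul, ← map_mul, ← map_mul, Subalgebra.mem_center_iff.1 hz]

theorem IsUnitaryRep.conjTranspose_mulVec_eq_zero (hB : IsUnitaryRep rk B) {z : UEA ι p}
    (hz : z ∈ Subalgebra.center ℂ (UEA ι p)) (hoff : z ∈ offCartan p rk) {y : S → ℂ}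
    (hy : IsSingular rk B y) : (B z)ᴴ *ᵥ y = 0 := by
  rw [← dotProduct_star_self_eq_zero, star_dotProduct_mulVec, Matrix.conjTranspose_conjTranspose,
    Matrix.star_dotProduct,
    hB.star_dotProduct_mulVec_eq_zero hoff (hy.mulVec (hB.commute_conjTranspose hz)) hy, star_zero]

theorem IsUnitaryRep.map_eq_zero_of_mem_offCartan (hB : IsUnitaryRep rk B) {z : UEA ι p}
    (hz : z ∈ Subalgebra.center ℂ (UEA ι p)) (hoff : z ∈ offCartan p rk) : B z = 0 := by
  have hcomm (i j : ι) : B (gen p i j) * B z = B z * B (gen p i j) := by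
    rw [← map_mul, ← map_mul, Subalgebra.mem_center_iff.1 hz]
  obtain ⟨h, hh⟩ := hB.exists_height
  suffices hzero : ∀ N, ∀ x : S → ℂ, (∀ s, (B z *ᵥ x) s ≠ 0 → h s < N) → B z *ᵥ x = 0 by
    ext s t
    have hx := hzero (Finset.univ.sup h + 1) (Pi.single t 1) fun s _ =>
      Nat.lt_succ_of_le (Finset.le_sup (Finset.mem_univ s))
    simpa using congrFun hx s
  intro N
  induction N with
  | zero => exact fun x hx => funext fun s => by_contra fun hs => Nat.not_lt_zero _ (hx s hs)
  | succ N ih =>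
    intro x hx
    have hsing : IsSingular rk B (B z *ᵥ x) := fun i j hij => by
      rw [Matrix.mulVec_mulVec, hcomm, ← Matrix.mulVec_mulVec]
      refine ih _ fun s hs => ?_
      rw [Matrix.mulVec_mulVec, ← hcomm, ← Matrix.mulVec_mulVec] at hs
      obtain ⟨t, -, ht⟩ := Finset.exists_ne_zero_of_sum_ne_zero hs
      exact (hh i j hij s t (left_ne_zero_of_mul ht)).trans_le
        (Nat.lt_succ_iff.1 (hx t (right_ne_zero_of_mul ht)))
    rw [← dotProduct_star_self_eq_zero, star_dotProduct_mulVec,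
      hB.conjTranspose_mulVec_eq_zero hz hoff hsing, star_zero, zero_dotProduct]

theorem eq_zero_of_mem_center_of_mem_offCartan [Finite ι] {z : UEA ι p}
    (hz : z ∈ Subalgebra.center ℂ (UEA ι p)) (hoff : z ∈ offCartan p rk) : z = 0 :=
  eq_zero_of_forall_isUnitaryRep (rk := rk) fun _ _ _ _ hB =>
    hB.map_eq_zero_of_mem_offCartan hz hoff

end HarishChandraInjectivity

section VermaIdeal

variable {ι : Type} [DecidableEq ι] {p : ι → ℕ} {rk : ι → ℕ} {lam : ι → ℂ} {u : UEA ι p}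

variable (p rk lam) in
/-- The left ideal whose quotient is the Verma module of highest weight `lam`, where `e_ij` is a
raising operator when `rk i < rk j`. -/
def vermaIdeal : Ideal (UEA ι p) :=
  Ideal.span ({u | ∃ i j, rk i < rk j ∧ u = gen p i j} ∪
    Set.range fun i => gen p i i - algebraMap ℂ (UEA ι p) (lam i))

theorem gen_mem_vermaIdeal {i j : ι} (h : rk i < rk j) : gen p i j ∈ vermaIdeal p rk lam :=
  Ideal.subset_span (Or.inl ⟨i, j, h, rfl⟩)

theorem gen_diag_sub_mem_vermaIdeal (i : ι) :
    gen p i i - algebraMap ℂ (UEA ι p) (lam i) ∈ vermaIdeal p rk lam :=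
  Ideal.subset_span (Or.inr ⟨i, rfl⟩)

theorem apply_eq_zero_of_mem_vermaIdeal {W : Type*} [AddCommGroup W] [Module ℂ W]
    {ρ : UEA ι p →ₐ[ℂ] Module.End ℂ W} {w : W} (hw : ∀ i j, rk i < rk j → ρ (gen p i j) w = 0)
    (hwt : ∀ i, ρ (gen p i i) w = lam i • w) (hu : u ∈ vermaIdeal p rk lam) : ρ u w = 0 := by
  induction hu using Submodule.span_induction with
  | mem u hu =>
    rcases hu with ⟨i, j, hij, rfl⟩ | ⟨i, rfl⟩
    · exact hw i j hij
    · simp [hwt i]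
  | zero => simp
  | add u v _ _ hu hv => simp [hu, hv]
  | smul a u _ hu => simp [hu]

variable [Fintype ι]

theorem eval_hcProj_eq_zero_of_mem_vermaIdeal (hrk : Function.Injective rk)
    (hu : u ∈ vermaIdeal p rk lam) : MvPolynomial.eval lam (hcProj p rk u) = 0 := by
  suffices h : ∀ a, MvPolynomial.eval lam (hcProj p rk (a * u)) = 0 by simpa using h 1
  induction hu using Submodule.span_induction with
  | mem u hu =>
    intro a
    rcases hu with ⟨i, j, hij, rfl⟩ | ⟨i, rfl⟩
    · rw [hcProj_eq_zero_of_mem_offCartan (mul_gen_mem_offCartan hij a), map_zero]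
    · rw [mul_sub, ← Algebra.commutes, ← Algebra.smul_def, map_sub, map_smul,
        hcProj_mul_gen_diag hrk, map_sub, map_mul, MvPolynomial.eval_X, MvPolynomial.smul_eval,
        mul_comm, sub_self]
  | zero => simp
  | add u v _ _ hu hv => simp [mul_add, hu, hv]
  | smul b u _ hu => intro a; rw [smul_eq_mul, ← mul_assoc]; exact hu (a * b)

omit [Fintype ι] in
theorem one_notMem_vermaIdeal [Finite ι] (hrk : Function.Injective rk) :
    1 ∉ vermaIdeal p rk lam := by
  have := Fintype.ofFinite ι
  intro h
  simpa [hcProj_one] using eval_hcProj_eq_zero_of_mem_vermaIdeal hrk h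

omit [Fintype ι] in
theorem eq_zero_of_mem_center_of_forall_mem_vermaIdeal [Finite ι] (hrk : Function.Injective rk)
    {Λ : ι → Set ℂ} (hΛ : ∀ i, (Λ i).Infinite) {z : UEA ι p}
    (hz : z ∈ Subalgebra.center ℂ (UEA ι p))
    (hmem : ∀ lam ∈ Set.univ.pi Λ, z ∈ vermaIdeal p rk lam) : z = 0 := by
  have := Fintype.ofFinite ι
  have hproj : hcProj p rk z = 0 := MvPolynomial.funext_set Λ hΛ fun lam hlam => by
    rw [map_zero, eval_hcProj_eq_zero_of_mem_vermaIdeal hrk (hmem lam hlam)]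
  exact eq_zero_of_mem_center_of_mem_offCartan hz (mem_offCartan_of_hcProj_eq_zero hrk hproj)

end VermaIdeal

section Weights

variable {m n : ℕ}

/-- The position of an index of `gl(m|n)` in the order `1 < ⋯ < m < 1̄ < ⋯ < n̄`, counted
from `0`. -/
def rank : Ind m n → ℕ := Sum.elim (fun i => i) fun j => m + j

theorem rank_injective : Function.Injective (rank (m := m) (n := n)) := by
  rintro (i | i) (j | j) h <;> simp only [rank, Sum.elim_inl, Sum.elim_inr] at h <;> grind

theorem iltI_iff_rank_lt {i j : Ind m n} : iltI i j ↔ rank i < rank j := by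
  rcases i with i | i <;> rcases j with j | j <;>
    simp only [iltI, rank, Sum.elim_inl, Sum.elim_inr] <;> grind

variable (m n) in
/-- The Verma module `M(lam)`, realised as the quotient of the enveloping superalgebra by
`vermaIdeal`. -/
def verma (lam : Ind m n → ℂ) : VermaM m n lam where
  L := UEA (Ind m n) pI ⧸ vermaIdeal pI rank lam
  ρ := Algebra.lsmul ℂ ℂ _
  v := Submodule.Quotient.mk 1
  v_ne h := one_notMem_vermaIdeal rank_injective ((Submodule.Quotient.mk_eq_zero _).1 h)
  hw i j hij := by
    simp only [Algebra.lsmul_coe]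
    rw [← Submodule.Quotient.mk_smul, Submodule.Quotient.mk_eq_zero, smul_eq_mul, mul_one]
    exact gen_mem_vermaIdeal (iltI_iff_rank_lt.1 hij)
  hwt i := by
    simp only [Algebra.lsmul_coe]
    rw [← Submodule.Quotient.mk_smul, ← Submodule.Quotient.mk_smul, Submodule.Quotient.eq,
      smul_eq_mul, mul_one, ← Algebra.algebraMap_eq_smul_one]
    exact gen_diag_sub_mem_vermaIdeal i
  gens N hN hv := by
    refine eq_top_iff.2 fun x _ => ?_
    obtain ⟨u, rfl⟩ := Submodule.Quotient.mk_surjective _ x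
    simpa [← Submodule.Quotient.mk_smul] using hN u _ hv
  univ W _ _ ρW w hw hwt := by
    let f : UEA (Ind m n) pI →ₗ[ℂ] W := LinearMap.applyₗ w ∘ₗ ρW.toLinearMap
    have hf : (vermaIdeal pI rank lam).restrictScalars ℂ ≤ LinearMap.ker f := fun _ hu =>
      apply_eq_zero_of_mem_vermaIdeal (fun i j hij => hw i j (iltI_iff_rank_lt.2 hij)) hwt hu
    refine ⟨((vermaIdeal pI rank lam).restrictScalars ℂ).liftQ f hf, ?_, fun u x => ?_⟩
    · change ρW 1 w = w
      rw [map_one, Module.End.one_apply]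
    · obtain ⟨a, rfl⟩ := Submodule.Quotient.mk_surjective _ x
      change ρW (u * a) w = ρW u (ρW a w)
      rw [map_mul, Module.End.mul_apply]

theorem mem_vermaIdeal_of_verma_apply_eq_zero {lam : Ind m n → ℂ} {u : UEA (Ind m n) pI}
    (h : (verma m n lam).ρ u (verma m n lam).v = 0) : u ∈ vermaIdeal pI rank lam := by
  have hmk : (Submodule.Quotient.mk (u * 1) : UEA (Ind m n) pI ⧸ vermaIdeal pI rank lam) = 0 := h
  rwa [mul_one, Submodule.Quotient.mk_eq_zero] at hmk

theorem infinite_setOf_im_eq (r : ℝ) : {c : ℂ | c.im = r}.Infinite :=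
  (Set.infinite_range_of_injective (f := fun x : ℝ => (⟨x, r⟩ : ℂ)) fun _ _ h =>
    congrArg Complex.re h).mono (by rintro _ ⟨x, rfl⟩; rfl)

theorem rhoS_im (i : Ind m n) : (rhoS i).im = 0 := by
  rcases i with i | i <;> simp [rhoS]

variable {lam : Ind m n → ℂ}

theorem antidom_of_im_strictMono (h : ∀ i j, iltI i j → (lam i).im < (lam j).im) :
    Antidom lam := by
  refine ⟨fun i j hij => ?_, fun i j hij => ?_⟩ <;> rintro ⟨N, hN⟩ <;>
    have him := congrArg Complex.im hN <;>
    simp only [Complex.sub_im, Complex.add_im, rhoS_im, Complex.natCast_im, Complex.one_im] at him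
  · linarith [h (Sum.inl i) (Sum.inl j) hij]
  · linarith [h (Sum.inr i) (Sum.inr j) hij]

theorem typical_of_im_pos (h : ∀ i, 0 < (lam i).im) : Typical lam := fun i j hij => by
  have him := congrArg Complex.im hij
  simp only [Complex.add_im, rhoS_im, Complex.zero_im] at him
  linarith [h (Sum.inl i), h (Sum.inr j)]

theorem ne_intCast_of_im_pos {c : ℂ} (h : 0 < c.im) : ¬∃ k : ℤ, c = k := by
  rintro ⟨k, rfl⟩
  simp at h

end Weights

end UEA

/-- Lemma 5.1.  The `D'(m|n)`-module `F = ⊕_{a∈ℤ} F_a` is faithful, and any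
central element of `U(gl(m|n))` annihilating `⊕_{λ∈AW_{m|n}} M(λ)` is zero. -/
theorem stmt10 (m n : ℕ) :
    (∀ d : Dprime m n,
      (∀ f : FSp m n, (d : Module.End ℂ (FSp m n)) f = 0) → d = 0) ∧
    (∀ z : UEA (Ind m n) pI, z ∈ Subalgebra.center ℂ (UEA (Ind m n) pI) →
      (∀ lam : Ind m n → ℂ, Antidom lam → Typical lam →
        (∀ i : Ind m n, ¬∃ k : ℤ, lam i = (k : ℂ)) →
        ∀ (V : VermaM m n lam) (x : V.L), V.ρ z x = 0) →
      z = 0) := by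
  refine ⟨fun d hd => Subtype.ext (LinearMap.ext hd), fun z hz h => ?_⟩
  refine UEA.eq_zero_of_mem_center_of_forall_mem_vermaIdeal UEA.rank_injective
    (Λ := fun i => {c | c.im = UEA.rank i + 1}) (fun _ => UEA.infinite_setOf_im_eq _) hz
    fun lam hlam => ?_
  have him (i : Ind m n) : (lam i).im = UEA.rank i + 1 := hlam i (Set.mem_univ i)
  have hpos (i : Ind m n) : 0 < (lam i).im := by rw [him]; positivity
  have hanti : Antidom lam := UEA.antidom_of_im_strictMono fun i j hij => by
    simpa [him] using UEA.iltI_iff_rank_lt.1 hij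
  exact UEA.mem_vermaIdeal_of_verma_apply_eq_zero <|
    h lam hanti (UEA.typical_of_im_pos hpos) (fun i => UEA.ne_intCast_of_im_pos (hpos i))
      (UEA.verma m n lam) _
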